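/- Among the 191 conjugacy classes of torsion-free genus-zero subgroups of PSL(2,ℤ) of index 24, classified by the number of loops of the associated dessin, i.e. the number of left cosets of Γ̄ fixed by T: exactly 20 classes have no T-fixed coset, exactly 45 have exactly one, exactly 71 have exactly two, exactly 40 have exactly three, exactly 14 have exactly four, and exactly 1 has exactly five. -/

import Mathlib

open Matrix

/-- `SL(2,ℤ)`: the group of 2×2 integer matrices of determinant 1. -/
abbrev SL2Z := Matrix.SpecialLinearGroup (Fin 2) ℤ

instance : Fact (Even (Fintype.card (Fin 2))) := ⟨by simp⟩

/-- The subgroup `{±I}` of `SL(2,ℤ)`. -/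
def pmOne : Subgroup SL2Z := Subgroup.zpowers (-1 : SL2Z)

instance : pmOne.Normal := by
  constructor
  intro x hx g
  obtain ⟨n, rfl⟩ := hx
  have h : Commute ((-1 : SL2Z) ^ n) g := (Commute.neg_one_left g).zpow_left n
  refine ⟨n, ?_⟩
  rw [← h.eq, mul_assoc, mul_inv_cancel, mul_one]

/-- `PSL(2,ℤ)`, the modular group, as the quotient of `SL(2,ℤ)` by `{±I}`. -/
abbrev PSL2Z := SL2Z ⧸ pmOne

/-- The natural projection `ξ : SL(2,ℤ) → PSL(2,ℤ)`. -/
def xi : SL2Z →* PSL2Z := QuotientGroup.mk' pmOne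

/-- The element `S` of `PSL(2,ℤ)`, the image of `[[0,-1],[1,0]]`. -/
def Sp : PSL2Z := xi ⟨!![0, -1; 1, 0], by norm_num [Matrix.det_fin_two_of]⟩

/-- The element `T` of `PSL(2,ℤ)`, the image of `[[1,1],[0,1]]`. -/
def Tp : PSL2Z := xi ⟨!![1, 1; 0, 1], by norm_num [Matrix.det_fin_two_of]⟩

/-- The number of left cosets in `PSL(2,ℤ)/Γ` fixed by `g` (for the
left-multiplication action).  For `g = S` this is `e₂(Γ)`, for `g = S*T` it is `e₃(Γ)`. -/
noncomputable def nFix (g : PSL2Z) (Γ : Subgroup PSL2Z) : ℕ :=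
  Nat.card {x : PSL2Z ⧸ Γ // g • x = x}

/-- The number of orbits of the cyclic subgroup generated by `g` on `PSL(2,ℤ)/Γ`.
For `g = S, S*T, T` these are `c₂(Γ), c₃(Γ), h(Γ)` respectively. -/
noncomputable def nOrb (g : PSL2Z) (Γ : Subgroup PSL2Z) : ℕ :=
  Nat.card (MulAction.orbitRel.Quotient (Subgroup.zpowers g) (PSL2Z ⧸ Γ))

/-- `Γ` has genus zero: `c₂(Γ) + c₃(Γ) + h(Γ) = index(Γ) + 2`. -/
def GenusZero (Γ : Subgroup PSL2Z) : Prop :=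
  nOrb Sp Γ + nOrb (Sp * Tp) Γ + nOrb Tp Γ = Γ.index + 2

/-- `Γ` is torsion free: it contains no nontrivial element of finite order. -/
def TorsionFree (Γ : Subgroup PSL2Z) : Prop :=
  ∀ x ∈ Γ, x ≠ 1 → ¬ IsOfFinOrder x

/-- Two subgroups of a group are conjugate. -/
def SubgroupConj {G : Type*} [Group G] (H K : Subgroup G) : Prop :=
  ∃ g : G, Subgroup.map (MulAut.conj g).toMonoidHom H = K

/-- The number of conjugacy classes of subgroups of `PSL(2,ℤ)` satisfying `P`. -/
noncomputable def countClasses (P : Subgroup PSL2Z → Prop) : ℕ :=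
  Nat.card (Quot fun A B : {Γ : Subgroup PSL2Z // P Γ} => SubgroupConj A.1 B.1)

/-- The index of the torsion free subgroup `Γ^tf` associated to `Γ`:
`index(Γ) + 3·e₂(Γ) + 2·e₃(Γ)`. -/
noncomputable def tfIdx (Γ : Subgroup PSL2Z) : ℕ :=
  Γ.index + 3 * nFix Sp Γ + 2 * nFix (Sp * Tp) Γ

/-!
Ping-pong with column signs of matrices shows that `PSL(2,ℤ)` is the free product of `⟨S⟩` and
`⟨S T⟩`, and every element of finite order is conjugate to a power of `S` or `S T`. A torsion-free
subgroup of index `3 n` is therefore the same as a rooted connected cubic dessin with `n` vertices: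
a fixed-point-free involution that glues the `3 n` darts in pairs, the action of `S T` rotating the
darts about each vertex.

Such a dessin is built edge by edge. Gluing the first open dart, in a fixed order, to another open
dart either splits a face or merges two, and gluing it to a new vertex keeps the number of faces.
The genus is zero exactly when no two faces are ever merged, so the rooted genus zero dessins form
the leaves of a search tree in which all gluings happen within a face.

It remains to pass from rooted dessins to conjugacy classes. For a subgroup `Γ` the number of
conjugates of `Γ` times the index of `Γ` in its normalizer is the index of `Γ`, and if only the
conjugates that contain `T` are counted the product is the number of loops. Hence the sum of the
normalizer indices over all rooted dessins whose root is a loop, if there is any loop, is the number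
of loops times the number of classes. The search evaluates these sums for all numbers of loops at
once, as the digits of one number.
-/

open Function MulAction Equiv Finset
open ModularGroup (S T)
open scoped UpperHalfPlane MatrixGroups Pointwise

section ModularGroup

/-- The image `ST` of `[[0,-1],[1,1]]` in `PSL(2,ℤ)`, the standard element of order 3. -/
abbrev Up : PSL2Z := Sp * Tp

lemma xi_S : xi S = Sp := rfl

lemma xi_ST : xi (S * T) = Up := rfl

lemma xi_surjective : Surjective xi := QuotientGroup.mk'_surjective _

lemma xi_eq_one_iff {g : SL2Z} : xi g = 1 ↔ g = 1 ∨ g = -1 := by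
  refine (QuotientGroup.eq_one_iff g).trans ⟨?_, ?_⟩
  · rintro ⟨n, rfl⟩
    exact n.even_or_odd.imp Even.neg_one_zpow Odd.neg_one_zpow
  · rintro (rfl | rfl)
    exacts [one_mem _, Subgroup.mem_zpowers _]

lemma xi_eq_xi_iff {g h : SL2Z} : xi g = xi h ↔ g = h ∨ g = -h := by
  rw [← mul_inv_eq_one, ← map_inv, ← map_mul, xi_eq_one_iff, mul_inv_eq_one, mul_inv_eq_iff_eq_mul,
    neg_one_mul]

lemma xi_neg (g : SL2Z) : xi (-g) = xi g := xi_eq_xi_iff.2 (.inr rfl)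

lemma Sp_mul_Sp : Sp * Sp = 1 := by
  rw [← xi_S, ← map_mul, xi_eq_one_iff]
  exact .inr (by decide)

lemma Up_mul_Up_mul_Up : Up * Up * Up = 1 := by
  rw [← xi_ST, ← map_mul, ← map_mul, xi_eq_one_iff]
  exact .inr (by decide)

lemma isOfFinOrder_Sp : IsOfFinOrder Sp :=
  isOfFinOrder_iff_pow_eq_one.2 ⟨2, two_pos, by rw [sq, Sp_mul_Sp]⟩

lemma isOfFinOrder_Up : IsOfFinOrder Up :=
  isOfFinOrder_iff_pow_eq_one.2 ⟨3, three_pos, by rw [pow_succ, sq, Up_mul_Up_mul_Up]⟩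

lemma Sp_ne_one : Sp ≠ 1 := by
  rw [← xi_S, Ne, xi_eq_one_iff]
  decide

lemma Up_ne_one : Up ≠ 1 := by
  rw [← xi_ST, Ne, xi_eq_one_iff]
  decide

lemma Tp_eq_Sp_mul_Up : Tp = Sp * Up := by
  rw [← mul_assoc, Sp_mul_Sp, one_mul]

lemma closure_Sp_Up : Subgroup.closure {Sp, Up} = ⊤ := by
  have closure_Sp_Tp : Subgroup.closure {Sp, Tp} = ⊤ := by
    have := congrArg (Subgroup.map xi) SpecialLinearGroup.SL2Z_generators
    rwa [MonoidHom.map_closure, Set.image_pair, Subgroup.map_top_of_surjective xi xi_surjective]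
      at this
  rw [eq_top_iff, ← closure_Sp_Tp, Subgroup.closure_le]
  rintro x (rfl | rfl)
  · exact Subgroup.subset_closure (.inl rfl)
  · rw [Tp_eq_Sp_mul_Up]
    exact mul_mem (Subgroup.subset_closure (.inl rfl)) (Subgroup.subset_closure (.inr rfl))

lemma PSL2Z_induction {p : PSL2Z → Prop} (one : p 1) (Sp_mul : ∀ g, p g → p (Sp * g))
    (Up_mul : ∀ g, p g → p (Up * g)) (g : PSL2Z) : p g := by
  have hg : g ∈ Submonoid.closure ({Sp, Up} : Set PSL2Z) := by
    rw [← Subgroup.closure_toSubmonoid_of_isOfFinOrder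
      (by simpa using ⟨isOfFinOrder_Sp, isOfFinOrder_Up⟩), Subgroup.mem_toSubmonoid,
      closure_Sp_Up]
    trivial
  induction hg using Submonoid.closure_induction_left with
  | one => exact one
  | mul_left x hx y _ ih =>
    rcases hx with rfl | rfl
    exacts [Sp_mul y ih, Up_mul y ih]

end ModularGroup

section Presentation

variable {K : Type*} [Group K]

/-- The homomorphism from the cyclic group of order `n` sending its generator to an element `c`
with `c ^ n = 1`. -/
def cyclicHom (n : ℕ) (c : K) (hc : c ^ n = 1) : Multiplicative (ZMod n) →* K :=
  AddMonoidHom.toMultiplicativeLeft <|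
    ZMod.lift n ⟨zmultiplesHom (Additive K) (.ofMul c), by simp [← ofMul_pow, hc]⟩

lemma cyclicHom_ofAdd_one {n : ℕ} {c : K} (hc : c ^ n = 1) :
    cyclicHom n c hc (.ofAdd 1) = c := by
  have := ZMod.lift_coe n ⟨zmultiplesHom (Additive K) (.ofMul c), by simp [← ofMul_pow, hc]⟩ 1
  simpa [cyclicHom] using congrArg Additive.toMul this

/-- The factors `ℤ/2` and `ℤ/3` of the free product `ℤ/2 * ℤ/3`. -/
abbrev Factor (i : Bool) : Type := Multiplicative (ZMod (bif i then 3 else 2))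

/-- The pair of homomorphisms from `ℤ/2` and `ℤ/3` sending their generators to `a` and `b`. -/
def factorHom {a b : K} (ha : a * a = 1) (hb : b * b * b = 1) : (i : Bool) → Factor i →* K
  | false => cyclicHom 2 a (by rw [sq, ha])
  | true => cyclicHom 3 b (by rw [pow_succ, sq, hb])

open Monoid.CoprodI

/-- The sets `{ab > 0}` and `{ab < 0}` of classes of matrices with first column `(a, b)`, on which
`⟨S⟩` and `⟨ST⟩` play ping-pong. -/
def columnSignSet : Bool → Set PSL2Z
  | false => xi '' {g : SL2Z | 0 < g 0 0 * g 1 0}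
  | true => xi '' {g : SL2Z | g 0 0 * g 1 0 < 0}

lemma disjoint_columnSignSet : Disjoint (columnSignSet false) (columnSignSet true) := by
  rw [Set.disjoint_left]
  rintro _ ⟨g, hg, rfl⟩ ⟨h, hh, hgh⟩
  simp only [Set.mem_ofPred_eq] at hg hh
  rcases xi_eq_xi_iff.1 hgh with rfl | rfl
  · exact hg.not_gt hh
  · simp only [SpecialLinearGroup.coe_neg, Matrix.neg_apply, neg_mul_neg] at hh
    exact hg.not_gt hh

lemma S_mul_column (g : SL2Z) : (S * g) 0 0 = -g 1 0 ∧ (S * g) 1 0 = g 0 0 := by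
  simp [mul_apply, ModularGroup.coe_S, Fin.sum_univ_two]

lemma ST_mul_column (g : SL2Z) :
    (S * T * g) 0 0 = -g 1 0 ∧ (S * T * g) 1 0 = g 0 0 + g 1 0 := by
  simp [mul_apply, ModularGroup.coe_S, ModularGroup.coe_T, Fin.sum_univ_two]

lemma Sp_smul_columnSignSet : Sp • columnSignSet true ⊆ columnSignSet false := by
  rintro _ ⟨_, ⟨g, hg, rfl⟩, rfl⟩
  refine ⟨S * g, ?_, map_mul xi S g⟩
  rw [Set.mem_ofPred_eq] at hg ⊢
  rw [(S_mul_column g).1, (S_mul_column g).2]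
  linarith

lemma Up_smul_columnSignSet : Up • columnSignSet false ⊆ columnSignSet true := by
  rintro _ ⟨_, ⟨g, hg, rfl⟩, rfl⟩
  refine ⟨S * T * g, ?_, map_mul xi (S * T) g⟩
  rw [Set.mem_ofPred_eq] at hg ⊢
  rw [(ST_mul_column g).1, (ST_mul_column g).2]
  nlinarith [sq_nonneg (g 1 0)]

lemma Up_mul_Up_smul_columnSignSet : (Up * Up) • columnSignSet false ⊆ columnSignSet true := by
  rintro _ ⟨_, ⟨g, hg, rfl⟩, rfl⟩
  refine ⟨S * T * (S * T * g), ?_, (map_mul xi _ _).trans ?_⟩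
  swap
  · exact (congrArg (Up * ·) (map_mul xi (S * T) g)).trans (mul_assoc Up Up _).symm
  rw [Set.mem_ofPred_eq] at hg ⊢
  rw [(ST_mul_column _).1, (ST_mul_column (S * T * g)).2, (ST_mul_column g).1, (ST_mul_column g).2]
  nlinarith [sq_nonneg (g 0 0)]

lemma columnSignSet_nonempty (i : Bool) : (columnSignSet i).Nonempty := by
  have nonempty_false : (columnSignSet false).Nonempty :=
    .image _ ⟨(⟨!![1, 0; 1, 1], by simp⟩ : SL2Z), (zero_lt_one : (0 : ℤ) < 1 * 1)⟩
  cases i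
  exacts [nonempty_false, nonempty_false.smul_set.mono Up_smul_columnSignSet]

lemma factorHom_smul_columnSignSet :
    ∀ i j, i ≠ j → ∀ h : Factor i, h ≠ 1 →
      factorHom Sp_mul_Sp Up_mul_Up_mul_Up i h • columnSignSet j ⊆ columnSignSet i
  | false, true, _, h, hh => by
    obtain rfl : h = .ofAdd (1 : ZMod 2) :=
      (by decide : ∀ h : Multiplicative (ZMod 2), h ≠ 1 → h = .ofAdd 1) h hh
    rw [factorHom, cyclicHom_ofAdd_one]
    exact Sp_smul_columnSignSet
  | true, false, _, h, hh => by
    obtain rfl | rfl : h = .ofAdd (1 : ZMod 3) ∨ h = .ofAdd (1 : ZMod 3) * .ofAdd (1 : ZMod 3) :=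
      (by decide : ∀ h : Multiplicative (ZMod 3), h ≠ 1 → h = .ofAdd 1 ∨ h = .ofAdd 1 * .ofAdd 1)
        h hh
    · rw [factorHom, cyclicHom_ofAdd_one]
      exact Up_smul_columnSignSet
    · rw [map_mul, factorHom, cyclicHom_ofAdd_one]
      exact Up_mul_Up_smul_columnSignSet

theorem lift_factorHom_bijective :
    Bijective (lift (factorHom Sp_mul_Sp Up_mul_Up_mul_Up)) := by
  constructor
  · refine lift_injective_of_ping_pong _ (.inr ⟨true, ?_⟩) columnSignSet ?_ ?_
      factorHom_smul_columnSignSet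
    · change 3 ≤ Cardinal.mk (Multiplicative (ZMod 3))
      simp [Cardinal.mk_fintype]
    · exact columnSignSet_nonempty
    · rintro (_ | _) (_ | _) hij
      exacts [absurd rfl hij, disjoint_columnSignSet, disjoint_columnSignSet.symm, absurd rfl hij]
  · rw [← MonoidHom.range_eq_top, eq_top_iff, ← closure_Sp_Up, Subgroup.closure_le]
    rintro x (rfl | rfl)
    · exact ⟨of (i := false) (.ofAdd (1 : ZMod 2)), by rw [lift_of, factorHom, cyclicHom_ofAdd_one]⟩
    · exact ⟨of (i := true) (.ofAdd (1 : ZMod 3)), by rw [lift_of, factorHom, cyclicHom_ofAdd_one]⟩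

theorem exists_hom_Sp_Up {a b : K} (ha : a * a = 1) (hb : b * b * b = 1) :
    ∃ ρ : PSL2Z →* K, ρ Sp = a ∧ ρ Up = b := by
  let e := MulEquiv.ofBijective _ lift_factorHom_bijective
  have e_symm (i : Bool) (h : Factor i) :
      e.symm (factorHom Sp_mul_Sp Up_mul_Up_mul_Up i h) = of h :=
    e.symm_apply_eq.2 (lift_of _ _).symm
  have apply_factor (i : Bool) (h : Factor i) :
      lift (factorHom ha hb) (e.symm (factorHom Sp_mul_Sp Up_mul_Up_mul_Up i h)) =
        factorHom ha hb i h := by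
    rw [e_symm, lift_of]
  refine ⟨(lift (factorHom ha hb)).comp e.symm.toMonoidHom, ?_, ?_⟩
  · have := apply_factor false (.ofAdd (1 : ZMod 2))
    rwa [factorHom, factorHom, cyclicHom_ofAdd_one, cyclicHom_ofAdd_one] at this
  · have := apply_factor true (.ofAdd (1 : ZMod 3))
    rwa [factorHom, factorHom, cyclicHom_ofAdd_one, cyclicHom_ofAdd_one] at this

end Presentation

section Torsion

open Polynomial (Chebyshev.S Chebyshev.S_add_two)

lemma mul_self_eq_trace_smul_sub_one {R : Type*} [CommRing R] {A : Matrix (Fin 2) (Fin 2) R}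
    (hA : A.det = 1) : A * A = A.trace • A - 1 := by
  nontriviality R
  have cayley_hamilton := aeval_self_charpoly A
  rw [charpoly_fin_two, hA] at cayley_hamilton
  simp only [map_add, map_sub, map_mul, map_pow, Polynomial.aeval_X, Polynomial.aeval_C, map_one,
    Algebra.algebraMap_eq_smul_one, smul_mul_assoc, one_mul] at cayley_hamilton
  rw [← sub_eq_zero, ← cayley_hamilton, sq]
  abel

lemma pow_succ_eq_chebyshevS_smul_sub {R : Type*} [CommRing R] {A : Matrix (Fin 2) (Fin 2) R}
    (hA : A.det = 1) (n : ℕ) :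
    A ^ (n + 1) =
      (Chebyshev.S R n).eval A.trace • A - (Chebyshev.S R (n - 1)).eval A.trace • 1 := by
  induction n with
  | zero => simp
  | succ n ih =>
    rw [pow_succ, ih, sub_mul, smul_mul_assoc, mul_self_eq_trace_smul_sub_one hA,
      Nat.cast_succ, add_sub_cancel_right, show (n : ℤ) + 1 = (n - 1 : ℤ) + 2 by ring,
      Chebyshev.S_add_two, show (n : ℤ) - 1 + 1 = n by ring]
    simp only [Polynomial.eval_sub, Polynomial.eval_mul, Polynomial.eval_X, smul_sub, sub_smul,
      smul_mul_assoc, one_mul, smul_smul]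
    rw [mul_comm]
    abel

lemma abs_eval_chebyshevS_add_one_le {t : ℤ} (ht : 2 ≤ |t|) (n : ℕ) :
    |(Chebyshev.S ℤ (n - 1)).eval t| + 1 ≤ |(Chebyshev.S ℤ n).eval t| := by
  induction n with
  | zero => simp
  | succ n ih =>
    rw [Nat.cast_succ, add_sub_cancel_right, show (n : ℤ) + 1 = (n - 1 : ℤ) + 2 by ring,
      Chebyshev.S_add_two, show (n : ℤ) - 1 + 1 = n by ring]
    simp only [Polynomial.eval_sub, Polynomial.eval_mul, Polynomial.eval_X]
    have := abs_sub_abs_le_abs_sub (t * (Chebyshev.S ℤ n).eval t)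
      ((Chebyshev.S ℤ (n - 1)).eval t)
    rw [abs_mul] at this
    nlinarith [abs_nonneg ((Chebyshev.S ℤ n).eval t)]

lemma eval_chebyshevS_ne_zero {t : ℤ} (ht : 2 ≤ |t|) (n : ℕ) : (Chebyshev.S ℤ n).eval t ≠ 0 := by
  have := abs_eval_chebyshevS_add_one_le ht n
  exact abs_pos.1 (by linarith [abs_nonneg ((Chebyshev.S ℤ (n - 1)).eval t)])

lemma eq_one_or_neg_one_of_smul_eq_smul_one {A : Matrix (Fin 2) (Fin 2) ℤ} (hA : A.det = 1)
    {a b : ℤ} (ha : a ≠ 0) (h : a • A = b • (1 : Matrix (Fin 2) (Fin 2) ℤ)) :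
    A = 1 ∨ A = -1 := by
  have entry (i j : Fin 2) : a * A i j = b * (1 : Matrix (Fin 2) (Fin 2) ℤ) i j := by
    simpa only [Matrix.smul_apply, smul_eq_mul] using congrFun (congrFun h i) j
  have h01 : A 0 1 = 0 := by simpa [ha] using entry 0 1
  have h10 : A 1 0 = 0 := by simpa [ha] using entry 1 0
  have h00 : A 0 0 = A 1 1 := mul_left_cancel₀ ha ((entry 0 0).trans (entry 1 1).symm)
  have det : A 1 1 * A 1 1 = 1 := by simpa [det_fin_two, h00, h01] using hA
  refine (mul_self_eq_one_iff.1 det).imp (fun h11 => ?_) fun h11 => ?_ <;>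
  · ext i j
    fin_cases i <;> fin_cases j <;> simp [h00, h01, h10, h11]

lemma abs_trace_le_one_of_isOfFinOrder {M : SL2Z} (hM : xi M ≠ 1) (hfin : IsOfFinOrder (xi M)) :
    |(M : Matrix (Fin 2) (Fin 2) ℤ).trace| ≤ 1 := by
  by_contra! ht
  obtain ⟨n, hn, hpow⟩ := isOfFinOrder_iff_pow_eq_one.1 hfin
  obtain ⟨n, rfl⟩ := Nat.exists_eq_add_one.2 hn
  set A := (M : Matrix (Fin 2) (Fin 2) ℤ) with hA
  obtain ⟨ε, hε⟩ : ∃ ε : ℤ, A ^ (n + 1) = ε • 1 := by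
    rw [← map_pow, xi_eq_one_iff] at hpow
    have coe_pow := M.coe_pow (n + 1)
    rcases hpow with h | h <;> rw [h] at coe_pow
    exacts [⟨1, by simp [hA, ← coe_pow]⟩, ⟨-1, by simp [hA, ← coe_pow]⟩]
  refine hM (xi_eq_one_iff.2 ((eq_one_or_neg_one_of_smul_eq_smul_one M.2
    (eval_chebyshevS_ne_zero ht n) (b := ε + (Chebyshev.S ℤ (n - 1)).eval A.trace) ?_).imp
    (Subtype.ext ·) (Subtype.ext ·)))
  rw [add_smul, ← hε, pow_succ_eq_chebyshevS_smul_sub M.2, sub_add_cancel]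

lemma exists_smul_eq_self_of_abs_trace_le_one {M : SL2Z}
    (h : |(M : Matrix (Fin 2) (Fin 2) ℤ).trace| ≤ 1) : ∃ z : ℍ, M • z = z := by
  set t := (M : Matrix (Fin 2) (Fin 2) ℤ).trace with ht
  let g : GL (Fin 2) ℝ := (M : SL(2, ℝ))
  have trace : g.val.trace = (t : ℝ) := by simp [g, ht, trace_fin_two]
  have det : g.val.det = 1 := (M : SL(2, ℝ)).det_coe
  have elliptic : g.IsElliptic := by
    have sq_lt : (t : ℝ) ^ 2 < 4 := by
      exact_mod_cast (by nlinarith [sq_abs t, abs_nonneg t] : t ^ 2 < 4)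
    rw [GeneralLinearGroup.IsElliptic, Matrix.IsElliptic, Matrix.discr_fin_two, trace, det]
    linarith
  exact ⟨_, (UpperHalfPlane.gl_smul_eq_self_iff_eq_fixedPt (by simp [det]) elliptic).2 rfl⟩

lemma xi_eq_Sp_of_smul_I {M : SL2Z} (h : M • UpperHalfPlane.I = UpperHalfPlane.I)
    (hM : xi M ≠ 1) : xi M = Sp := by
  have := ModularGroup.stabilizer_I.1 h
  simp only [Finset.mem_insert, Finset.mem_singleton] at this
  rcases this with rfl | rfl | rfl | rfl
  exacts [absurd (map_one xi) hM, absurd (xi_neg 1) hM, rfl, xi_neg S]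

lemma xi_eq_Up_or_inv_of_smul_ρ {M : SL2Z} (h : M • UpperHalfPlane.ρ = UpperHalfPlane.ρ)
    (hM : xi M ≠ 1) : xi M = Up ∨ xi M = Up⁻¹ := by
  have xi_T_inv_mul_S : xi (T⁻¹ * S) = Up⁻¹ := by
    rw [_root_.mul_inv_rev, inv_eq_of_mul_eq_one_left Sp_mul_Sp]
    rfl
  have := ModularGroup.stabilizer_ρ.1 h
  simp only [Finset.mem_insert, Finset.mem_singleton] at this
  rcases this with rfl | rfl | rfl | rfl | rfl | rfl
  exacts [absurd (map_one xi) hM, absurd (xi_neg 1) hM, .inl rfl, .inl (xi_neg (S * T)),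
    .inr xi_T_inv_mul_S, .inr ((xi_neg _).trans xi_T_inv_mul_S)]

lemma exists_conj_of_smul_eq_self {M : SL2Z} {z : ℍ} (h : M • z = z) (hM : xi M ≠ 1) :
    ∃ c : PSL2Z, c * xi M * c⁻¹ = Sp ∨ c * xi M * c⁻¹ = Up ∨ c * xi M * c⁻¹ = Up⁻¹ := by
  have conj_smul (k : SL2Z) : (k * M * k⁻¹) • k • z = k • z := by
    rw [mul_smul, mul_smul, inv_smul_smul, h]
  have xi_conj (k : SL2Z) : xi (k * M * k⁻¹) = xi k * xi M * (xi k)⁻¹ := by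
    rw [map_mul, map_mul, map_inv]
  have conj_ne (k : SL2Z) : xi (k * M * k⁻¹) ≠ 1 := by
    rwa [xi_conj, Ne, conj_eq_one_iff]
  obtain ⟨k, hk⟩ := ModularGroup.exists_smul_mem_fd z
  by_cases hI : k • z = UpperHalfPlane.I
  · refine ⟨xi k, .inl ?_⟩
    rw [← xi_conj]
    exact xi_eq_Sp_of_smul_I (hI ▸ conj_smul k) (conj_ne k)
  obtain ⟨k', hk'⟩ | hρ : (∃ k' : SL2Z, k' • z = UpperHalfPlane.ρ) ∨
      k • z ≠ UpperHalfPlane.ρ ∧ k • z ≠ (1 : ℝ) +ᵥ UpperHalfPlane.ρ := by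
    by_contra! hne
    have := hne.2 (hne.1 k)
    rw [← UpperHalfPlane.modular_T_smul, ← inv_smul_eq_iff, ← mul_smul] at this
    exact hne.1 _ this
  · refine ⟨xi k', .inr ?_⟩
    rw [← xi_conj]
    exact xi_eq_Up_or_inv_of_smul_ρ (hk' ▸ conj_smul k') (conj_ne k')
  · exact absurd (xi_eq_one_iff.2 (ModularGroup.stabilizer_of_ne hk (conj_smul k) hI hρ.1 hρ.2))
      (conj_ne k)

lemma smul_coset_ne_of_torsionFree {Γ : Subgroup PSL2Z} (hΓ : TorsionFree Γ) {g : PSL2Z}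
    (hg : IsOfFinOrder g) (hg1 : g ≠ 1) (x : PSL2Z ⧸ Γ) : g • x ≠ x := by
  obtain ⟨c, rfl⟩ := QuotientGroup.mk_surjective x
  intro h
  have isConj : IsConj g (c⁻¹ * g * c) := isConj_iff.2 ⟨c⁻¹, by rw [inv_inv]⟩
  refine hΓ (c⁻¹ * g * c) ?_ (fun h1 => hg1 ?_) (isConj.isOfFinOrder hg)
  · rw [mul_assoc]
    exact QuotientGroup.eq.1 h.symm
  · rwa [h1, isConj_one_left] at isConj

theorem torsionFree_iff {Γ : Subgroup PSL2Z} :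
    TorsionFree Γ ↔ (∀ x : PSL2Z ⧸ Γ, Sp • x ≠ x) ∧ ∀ x : PSL2Z ⧸ Γ, Up • x ≠ x := by
  refine ⟨fun h => ⟨smul_coset_ne_of_torsionFree h isOfFinOrder_Sp Sp_ne_one,
    smul_coset_ne_of_torsionFree h isOfFinOrder_Up Up_ne_one⟩, fun ⟨hS, hU⟩ g hg hg1 hfin => ?_⟩
  obtain ⟨M, rfl⟩ := xi_surjective g
  obtain ⟨z, hz⟩ :=
    exists_smul_eq_self_of_abs_trace_le_one (abs_trace_le_one_of_isOfFinOrder hg1 hfin)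
  obtain ⟨c, hc⟩ := exists_conj_of_smul_eq_self hz hg1
  have fixed : (c * xi M * c⁻¹) • (c : PSL2Z ⧸ Γ) = c := by
    refine QuotientGroup.eq.2 ?_
    simpa [mul_assoc] using inv_mem hg
  rcases hc with hc | hc | hc <;> rw [hc] at fixed
  exacts [hS _ fixed, hU _ fixed, hU _ (inv_smul_eq_iff.1 fixed).symm]

end Torsion

section Conjugacy

variable {G : Type*} [Group G]

lemma subgroupConj_iff_exists_stabilizer {H K : Subgroup G} :
    SubgroupConj H K ↔ ∃ x : G ⧸ H, stabilizer G x = K := by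
  have stabilizer_mk (g : G) :
      stabilizer G (g : G ⧸ H) = H.map (MulAut.conj g).toMonoidHom := by
    have := stabilizer_smul_eq_stabilizer_map_conj g ((1 : G) : G ⧸ H)
    rwa [stabilizer_quotient, Quotient.smul_coe, smul_eq_mul, mul_one] at this
  refine ⟨fun ⟨g, hg⟩ => ⟨g, (stabilizer_mk g).trans hg⟩, ?_⟩
  rintro ⟨x, rfl⟩
  obtain ⟨g, rfl⟩ := QuotientGroup.mk_surjective x
  exact ⟨g, (stabilizer_mk g).symm⟩

/-- The equivalence relation of being conjugate on the subgroups of a group. -/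
def conjSetoid (G : Type*) [Group G] : Setoid (Subgroup G) where
  r := SubgroupConj
  iseqv :=
    { refl := fun H => ⟨1, by ext; simp⟩
      symm := by
        rintro H _ ⟨g, rfl⟩
        exact ⟨g⁻¹, by ext; simp [mul_assoc]⟩
      trans := by
        rintro H _ _ ⟨g, rfl⟩ ⟨h, rfl⟩
        exact ⟨h * g, by rw [map_mul, Subgroup.map_map]; rfl⟩ }

/-- The index of `K` in its normalizer, encoded as the number of points of `G ⧸ K` whose stabilizer
is `K`. -/
noncomputable def normalizerIndex (K : Subgroup G) : ℕ :=
  Nat.card {x : G ⧸ K // stabilizer G x = K}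

section Transitive

variable {X : Type*} [MulAction G X] [IsPretransitive G X]

/-- The identification of a transitive `G`-set with the cosets of the stabilizer of one of its
points. -/
noncomputable def cosetEquiv (x : X) : (G ⧸ stabilizer G x) ≃ X :=
  .ofBijective (ofQuotientStabilizer G x)
    ⟨injective_ofQuotientStabilizer G x, fun y => (exists_smul_eq G x y).elim fun g hg => ⟨g, hg⟩⟩

lemma cosetEquiv_smul (x : X) (g : G) (q : G ⧸ stabilizer G x) :
    cosetEquiv x (g • q) = g • cosetEquiv x q :=
  ofQuotientStabilizer_smul G x g q

lemma smul_cosetEquiv_eq_iff (x : X) (g : G) (q : G ⧸ stabilizer G x) :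
    g • cosetEquiv x q = cosetEquiv x q ↔ g • q = q := by
  rw [← cosetEquiv_smul, (cosetEquiv x).apply_eq_iff_eq]

lemma normalizerIndex_stabilizer (x : X) :
    normalizerIndex (stabilizer G x) = Nat.card {y : X // stabilizer G y = stabilizer G x} := by
  refine Nat.card_congr ((cosetEquiv x).subtypeEquiv fun q => ?_)
  rw [show stabilizer G (cosetEquiv x q) = stabilizer G q from
    Subgroup.ext fun g => smul_cosetEquiv_eq_iff x g q]

end Transitive

lemma sum_normalizerIndex_conjugates {H : Subgroup G} {g : G} [Finite (fixedBy (G ⧸ H) g)]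
    {s : Finset (Subgroup G)} (hs : ∀ K, K ∈ s ↔ SubgroupConj H K ∧ g ∈ K) :
    ∑ K ∈ s, normalizerIndex K = Nat.card (fixedBy (G ⧸ H) g) := by
  classical
  have := Fintype.ofFinite (fixedBy (G ⧸ H) g)
  have fiber {K} (hK : K ∈ s) :
      normalizerIndex K = #{x : fixedBy (G ⧸ H) g | stabilizer G x.1 = K} := by
    obtain ⟨hHK, hgK⟩ := (hs K).1 hK
    obtain ⟨x, rfl⟩ := subgroupConj_iff_exists_stabilizer.1 hHK
    rw [normalizerIndex_stabilizer, ← Fintype.card_subtype, ← Nat.card_eq_fintype_card]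
    exact Nat.card_congr (subtypeSubtypeEquivSubtype fun {y} hy => by
      rwa [mem_fixedBy, ← mem_stabilizer_iff, hy]).symm
  have mapsTo (x : fixedBy (G ⧸ H) g) : stabilizer G x.1 ∈ s :=
    (hs _).2 ⟨subgroupConj_iff_exists_stabilizer.2 ⟨x, rfl⟩, x.2⟩
  rw [sum_congr rfl fun K => fiber, Nat.card_eq_fintype_card, ← card_univ]
  exact (card_eq_sum_card_fiberwise fun x _ => mapsTo x).symm

end Conjugacy

section CountClasses

lemma nFix_one (Γ : Subgroup PSL2Z) : nFix 1 Γ = Γ.index := by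
  simp [nFix, Subgroup.index]

section Transitive

variable {X : Type*} [MulAction PSL2Z X] [IsPretransitive PSL2Z X]

lemma nFix_stabilizer (g : PSL2Z) (x : X) :
    nFix g (stabilizer PSL2Z x) = Nat.card (fixedBy X g) :=
  Nat.card_congr <| (cosetEquiv x).subtypeEquiv fun q => (smul_cosetEquiv_eq_iff x g q).symm

lemma nOrb_stabilizer (g : PSL2Z) (x : X) :
    nOrb g (stabilizer PSL2Z x) = Nat.card (orbitRel.Quotient (Subgroup.zpowers g) X) := by
  refine Nat.card_congr (Quotient.congr (cosetEquiv x) fun p q => ?_)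
  refine exists_congr fun z => ?_
  change z.1 • q = p ↔ z.1 • cosetEquiv x q = _
  rw [← cosetEquiv_smul, (cosetEquiv x).apply_eq_iff_eq]

lemma torsionFree_stabilizer_iff (x : X) :
    TorsionFree (stabilizer PSL2Z x) ↔ (∀ y : X, Sp • y ≠ y) ∧ ∀ y : X, Up • y ≠ y := by
  have (g : PSL2Z) : (∀ y : X, g • y ≠ y) ↔ ∀ q : PSL2Z ⧸ stabilizer PSL2Z x, g • q ≠ q := by
    simp_rw [← (cosetEquiv (G := PSL2Z) x).forall_congr_right, Ne, smul_cosetEquiv_eq_iff]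
  rw [torsionFree_iff, this, this]

end Transitive

variable {Γ Δ : Subgroup PSL2Z}

lemma index_eq_of_subgroupConj (h : SubgroupConj Γ Δ) : Δ.index = Γ.index := by
  obtain ⟨x, rfl⟩ := subgroupConj_iff_exists_stabilizer.1 h
  exact index_stabilizer_of_transitive PSL2Z x

lemma nFix_eq_of_subgroupConj (h : SubgroupConj Γ Δ) (g : PSL2Z) : nFix g Δ = nFix g Γ := by
  obtain ⟨x, rfl⟩ := subgroupConj_iff_exists_stabilizer.1 h
  exact nFix_stabilizer g x

lemma nOrb_eq_of_subgroupConj (h : SubgroupConj Γ Δ) (g : PSL2Z) : nOrb g Δ = nOrb g Γ := by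
  obtain ⟨x, rfl⟩ := subgroupConj_iff_exists_stabilizer.1 h
  exact nOrb_stabilizer g x

lemma genusZero_iff_of_subgroupConj (h : SubgroupConj Γ Δ) : GenusZero Δ ↔ GenusZero Γ := by
  simp_rw [GenusZero, nOrb_eq_of_subgroupConj h, index_eq_of_subgroupConj h]

lemma torsionFree_iff_of_subgroupConj (h : SubgroupConj Γ Δ) : TorsionFree Δ ↔ TorsionFree Γ := by
  obtain ⟨x, rfl⟩ := subgroupConj_iff_exists_stabilizer.1 h
  rw [torsionFree_stabilizer_iff, torsionFree_iff]

/-- The torsion-free genus zero subgroups of `PSL(2,ℤ)` of index `N`. -/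
abbrev TorsionFreeGenusZero (N : ℕ) (Γ : Subgroup PSL2Z) : Prop :=
  Γ.index = N ∧ GenusZero Γ ∧ TorsionFree Γ

lemma TorsionFreeGenusZero.of_subgroupConj {N : ℕ} (h : SubgroupConj Γ Δ)
    (hΓ : TorsionFreeGenusZero N Γ) : TorsionFreeGenusZero N Δ :=
  ⟨(index_eq_of_subgroupConj h).trans hΓ.1, (genusZero_iff_of_subgroupConj h).2 hΓ.2.1,
    (torsionFree_iff_of_subgroupConj h).2 hΓ.2.2⟩

/-- The conjugacy classes of the subgroups of `PSL(2,ℤ)` satisfying `P`. -/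
def classes (P : Subgroup PSL2Z → Prop) : Set (Quotient (conjSetoid PSL2Z)) :=
  Quotient.mk _ '' {Γ | P Γ}

variable {P : Subgroup PSL2Z → Prop}

lemma countClasses_eq_ncard (P : Subgroup PSL2Z → Prop) : countClasses P = (classes P).ncard := by
  refine Nat.card_congr ((Setoid.comapQuotientEquiv Subtype.val (conjSetoid PSL2Z)).trans ?_)
  exact .setCongr ((Set.range_comp _ _).trans (congrArg _ Subtype.range_val))

section Sum

variable (hP : ∀ {Γ Δ}, SubgroupConj Γ Δ → P Γ → P Δ) {g : PSL2Z} {s : Finset (Subgroup PSL2Z)}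
include hP

lemma classes_eq_image (hs : ∀ Γ, Γ ∈ s ↔ P Γ ∧ (nFix g Γ = 0 ∨ g ∈ Γ)) :
    classes P = Quotient.mk (conjSetoid PSL2Z) '' s := by
  ext c
  constructor
  · rintro ⟨Γ, hΓ, rfl⟩
    by_cases h : nFix g Γ = 0
    · exact ⟨Γ, (hs Γ).2 ⟨hΓ, .inl h⟩, rfl⟩
    · obtain ⟨⟨x, hx⟩⟩ := (Nat.card_ne_zero.1 h).1
      have hconj := subgroupConj_iff_exists_stabilizer.2 ⟨x, rfl⟩
      exact ⟨_, (hs _).2 ⟨hP hconj hΓ, .inr hx⟩, (Quotient.sound hconj).symm⟩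
  · rintro ⟨Γ, hΓ, rfl⟩
    exact ⟨Γ, ((hs Γ).1 hΓ).1, rfl⟩

lemma sum_normalizerIndex_eq_mul_countClasses {m : ℕ} (hm : m ≠ 0) (hg : ∀ Γ, P Γ → nFix g Γ = m)
    (hs : ∀ Γ, Γ ∈ s ↔ P Γ ∧ g ∈ Γ) :
    ∑ Γ ∈ s, normalizerIndex Γ = m * countClasses P := by
  classical
  have classes_eq := classes_eq_image hP (g := g) (s := s) fun Γ =>
    (hs Γ).trans <| and_congr_right fun hΓ => by simp [hg Γ hΓ, hm]
  rw [countClasses_eq_ncard, classes_eq, ← coe_image, Set.ncard_coe_finset, mul_comm,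
    ← smul_eq_mul, ← sum_const,
    ← sum_fiberwise_of_maps_to fun Γ => mem_image_of_mem (Quotient.mk (conjSetoid PSL2Z))]
  refine sum_congr rfl fun c hc => ?_
  obtain ⟨Γ, hΓ, rfl⟩ := mem_image.1 hc
  have hΓP := ((hs Γ).1 hΓ).1
  have : Finite (fixedBy (PSL2Z ⧸ Γ) g) := Nat.finite_of_card_ne_zero ((hg Γ hΓP).trans_ne hm)
  rw [← hg Γ hΓP]
  refine sum_normalizerIndex_conjugates fun Δ => ?_
  rw [mem_filter, hs, Quotient.eq]
  exact ⟨fun h => ⟨(conjSetoid _).symm h.2, h.1.2⟩,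
    fun h => ⟨⟨hP h.1 hΓP, h.2⟩, (conjSetoid _).symm h.1⟩⟩

lemma sum_filter_normalizerIndex {N : ℕ} (hN : N ≠ 0) (hPN : ∀ Γ, P Γ → Γ.index = N)
    (hs : ∀ Γ, Γ ∈ s ↔ P Γ ∧ (nFix g Γ = 0 ∨ g ∈ Γ)) (m : ℕ) :
    ∑ Γ ∈ s with nFix g Γ = m, normalizerIndex Γ =
      (if m = 0 then N else m) * countClasses fun Γ => P Γ ∧ nFix g Γ = m := by
  have hPm {Γ Δ} (h : SubgroupConj Γ Δ) (hΓ : P Γ ∧ nFix g Γ = m) : P Δ ∧ nFix g Δ = m :=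
    ⟨hP h hΓ.1, (nFix_eq_of_subgroupConj h g).trans hΓ.2⟩
  split_ifs with hm
  · refine sum_normalizerIndex_eq_mul_countClasses hPm (g := 1) hN
      (fun Γ hΓ => (nFix_one Γ).trans (hPN Γ hΓ.1)) fun Γ => ?_
    simp only [mem_filter, hs, one_mem, and_true, and_assoc]
    exact and_congr_right fun _ => and_iff_right_of_imp fun h => .inl (h.trans hm)
  · refine sum_normalizerIndex_eq_mul_countClasses hPm hm (fun Γ hΓ => hΓ.2) fun Γ => ?_
    rw [mem_filter, hs]
    aesop

end Sum

lemma countClasses_eq_sum (hfin : (classes P).Finite) {ν : Subgroup PSL2Z → ℕ}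
    (hν : ∀ {Γ Δ}, SubgroupConj Γ Δ → ν Δ = ν Γ) {n : ℕ} (hn : ∀ Γ, P Γ → ν Γ < n) :
    countClasses P = ∑ m ∈ range n, countClasses fun Γ => P Γ ∧ ν Γ = m := by
  let ν' : Quotient (conjSetoid PSL2Z) → ℕ := Quotient.lift ν fun _ _ h => (hν h).symm
  have mapsTo {c} (hc : c ∈ hfin.toFinset) : ν' c ∈ range n := by
    obtain ⟨Γ, hΓ, rfl⟩ := hfin.mem_toFinset.1 hc
    exact mem_range.2 (hn Γ hΓ)
  rw [countClasses_eq_ncard, Set.ncard_eq_toFinset_card _ hfin,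
    card_eq_sum_card_fiberwise fun c => mapsTo]
  refine sum_congr rfl fun m _ => ?_
  rw [countClasses_eq_ncard, ← Set.ncard_coe_finset]
  congr 1
  ext c
  simp only [coe_filter, Set.Finite.mem_toFinset]
  constructor
  · rintro ⟨⟨Γ, hΓ, rfl⟩, hm⟩
    exact ⟨Γ, ⟨hΓ, hm⟩, rfl⟩
  · rintro ⟨Γ, hΓ, rfl⟩
    exact ⟨⟨Γ, hΓ.1, rfl⟩, hΓ.2⟩

end CountClasses

section Genus

lemma nOrb_mul_orderOf {Γ : Subgroup PSL2Z} {g : PSL2Z} (hg : (orderOf g).Prime)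
    (hfix : ∀ x : PSL2Z ⧸ Γ, g • x ≠ x) : nOrb g Γ * orderOf g = Γ.index := by
  have : Fact (Nat.card (Subgroup.zpowers g)).Prime := ⟨by rwa [Nat.card_zpowers]⟩
  have stabilizer_eq_bot (x : PSL2Z ⧸ Γ) : stabilizer (Subgroup.zpowers g) x = ⊥ :=
    (Subgroup.eq_bot_or_eq_top_of_prime_card _).resolve_right fun h =>
      hfix x (h.ge (Subgroup.mem_top ⟨g, Subgroup.mem_zpowers g⟩))
  rw [nOrb, ← Nat.card_zpowers, ← Nat.card_prod, Subgroup.index]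
  exact Nat.card_congr (selfEquivOrbitsQuotientProd stabilizer_eq_bot).symm

lemma TorsionFree.genusZero_iff {Γ : Subgroup PSL2Z} (hΓ : TorsionFree Γ) :
    GenusZero Γ ↔ 6 * nOrb Tp Γ = Γ.index + 12 := by
  obtain ⟨hSp, hUp⟩ := torsionFree_iff.1 hΓ
  have orderOf_Sp : orderOf Sp = 2 := orderOf_eq_prime (by rw [sq, Sp_mul_Sp]) Sp_ne_one
  have orderOf_Up : orderOf Up = 3 :=
    orderOf_eq_prime (by rw [pow_succ, sq, Up_mul_Up_mul_Up]) Up_ne_one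
  have card_Sp := nOrb_mul_orderOf (orderOf_Sp.symm ▸ Nat.prime_two) hSp
  have card_Up := nOrb_mul_orderOf (orderOf_Up.symm ▸ Nat.prime_three) hUp
  rw [orderOf_Sp] at card_Sp
  rw [orderOf_Up] at card_Up
  rw [GenusZero]
  lia

end Genus

section CycleCount

variable {α : Type*} {p : Perm α} {x y : α}

lemma rel_swap_apply [DecidableEq α] {r : Setoid α} (h : r x y) (z : α) : r z (swap x y z) := by
  rw [swap_apply_def]
  split_ifs with hx hy
  exacts [hx ▸ h, hy ▸ r.symm h, r.refl z]

lemma swap_mul_pow_apply [DecidableEq α] {k : ℕ}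
    (h : ∀ j, 0 < j → j < k → (p ^ j) x ≠ x ∧ (p ^ j) x ≠ y) :
    ∀ {j : ℕ}, 0 < j → j ≤ k → ((swap x y * p) ^ j) x = swap x y ((p ^ j) x)
  | 1, _, _ => by simp
  | j + 2, _, hj => by
    have hj' := h (j + 1) j.succ_pos hj
    rw [pow_succ', Perm.mul_apply, swap_mul_pow_apply h j.succ_pos (Nat.le_of_lt hj),
      swap_apply_of_ne_of_ne hj'.1 hj'.2, pow_succ' p (j + 1)]
    rfl

variable [Finite α]

lemma card_quotient_add_one {r s : Setoid α} (hle : r ≤ s) (hs : s x y) (hr : ¬r x y)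
    (h : ∀ z w, ¬r z y → ¬r w y → s z w → r z w) :
    Nat.card (Quotient s) + 1 = Nat.card (Quotient r) := by
  classical
  let f (c : {c : Quotient r // c ≠ ⟦y⟧}) : Quotient s := Quotient.map id hle c.1
  have hf : Bijective f := by
    constructor
    · rintro ⟨⟨z⟩, hz⟩ ⟨⟨w⟩, hw⟩ hzw
      exact Subtype.ext (Quotient.sound
        (h z w (mt Quotient.sound hz) (mt Quotient.sound hw) (Quotient.exact hzw)))
    · rintro ⟨z⟩
      by_cases hz : r z y
      · exact ⟨⟨⟦x⟧, mt Quotient.exact hr⟩, Quotient.sound (s.trans hs (s.symm (hle hz)))⟩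
      · exact ⟨⟨⟦z⟧, mt Quotient.exact hz⟩, rfl⟩
  rw [← Nat.card_congr (.ofBijective f hf), ← Finite.card_option]
  exact Nat.card_congr (optionSubtypeNe _)

/-- The number of cycles of a permutation, fixed points included. -/
noncomputable def numCycles (p : Perm α) : ℕ :=
  Nat.card (Quotient (Perm.SameCycle.setoid p))

lemma exists_first_return (p : Perm α) (x y : α) :
    ∃ k, 0 < k ∧ ((p ^ k) x = x ∨ (p ^ k) x = y) ∧
      ∀ j, 0 < j → j < k → (p ^ j) x ≠ x ∧ (p ^ j) x ≠ y := by
  classical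
  have hreturn : ∃ k, 0 < k ∧ ((p ^ k) x = x ∨ (p ^ k) x = y) :=
    ⟨orderOf p, orderOf_pos p, .inl (by rw [pow_orderOf_eq_one]; rfl)⟩
  refine ⟨Nat.find hreturn, (Nat.find_spec hreturn).1, (Nat.find_spec hreturn).2, fun j h0 hj => ?_⟩
  have := Nat.find_min hreturn hj
  tauto

lemma not_sameCycle_of_return {k : ℕ} (hk : 0 < k) (hx : (p ^ k) x = x)
    (hy : ∀ j < k, (p ^ j) x ≠ y) : ¬p.SameCycle x y := by
  intro h
  obtain ⟨i, rfl⟩ := h.exists_nat_pow_eq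
  refine hy (i % k) (i.mod_lt hk) ?_
  rw [← Perm.iterate_eq_pow] at hx
  simpa only [Perm.iterate_eq_pow] using IsPeriodicPt.iterate_mod_apply hx i

lemma exists_injOn_pow (h : p.SameCycle x y) :
    ∃ k : ℕ, (p ^ k) x = y ∧ Set.InjOn (fun i : ℕ => (p ^ i) x) (Set.Iic k) := by
  classical
  have hk := h.exists_nat_pow_eq
  refine ⟨Nat.find hk, Nat.find_spec hk, fun i hi j hj hij => ?_⟩
  by_contra hne
  wlog hlt : i < j generalizing i j
  · exact this j hj i hi hij.symm (Ne.symm hne) (lt_of_le_of_ne (not_lt.1 hlt) (Ne.symm hne))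
  refine Nat.find_min hk (m := Nat.find hk - j + i)
    (by have := Set.mem_Iic.1 hj; omega) ?_
  rw [pow_add, Perm.mul_apply]
  change (p ^ i) x = (p ^ j) x at hij
  rw [hij, ← Perm.mul_apply, ← pow_add, Nat.sub_add_cancel hj]
  exact Nat.find_spec hk

lemma sameCycle_le {r : Setoid α} (h : ∀ z, r z (p z)) {z w : α} (hzw : p.SameCycle z w) :
    r z w := by
  obtain ⟨n, rfl⟩ := hzw.exists_nat_pow_eq
  induction n with
  | zero => exact r.refl _
  | succ n ih =>
    rw [pow_succ']
    exact r.trans (ih ⟨n, by simp⟩) (h _)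

variable [DecidableEq α]

lemma sameCycle_swap_mul (h : ¬p.SameCycle x y) : (swap x y * p).SameCycle x y := by
  obtain ⟨k, hk, hxy, hlt⟩ := exists_first_return p x y
  have hx : (p ^ k) x = x := hxy.resolve_right fun h' => h ⟨k, by simpa using h'⟩
  refine ⟨k, ?_⟩
  rw [zpow_natCast, swap_mul_pow_apply hlt hk le_rfl, hx, swap_apply_left]

lemma not_sameCycle_swap_mul (hne : x ≠ y) (h : p.SameCycle x y) :
    ¬(swap x y * p).SameCycle x y := by
  obtain ⟨k, hk, hxy, hlt⟩ := exists_first_return p x y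
  have hy : (p ^ k) x = y := by
    refine hxy.resolve_left fun hx => not_sameCycle_of_return hk hx (fun j hj => ?_) h
    rcases j.eq_zero_or_pos with rfl | hj0
    exacts [hne, (hlt j hj0 hj).2]
  refine not_sameCycle_of_return hk ?_ fun j hj => ?_
  · rw [swap_mul_pow_apply hlt hk le_rfl, hy, swap_apply_right]
  · rcases j.eq_zero_or_pos with rfl | hj0
    · exact hne
    · rw [swap_mul_pow_apply hlt hj0 hj.le,
        swap_apply_of_ne_of_ne (hlt j hj0 hj).1 (hlt j hj0 hj).2]
      exact (hlt j hj0 hj).2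

lemma sameCycle_le_sameCycle_swap_mul (h : ¬p.SameCycle x y) {z w : α} (hzw : p.SameCycle z w) :
    (swap x y * p).SameCycle z w := by
  let r := Perm.SameCycle.setoid (swap x y * p)
  refine sameCycle_le (r := r) (fun z => ?_) hzw
  have := rel_swap_apply (r := r) (sameCycle_swap_mul h) ((swap x y * p) z)
  rw [Perm.mul_apply, swap_apply_self] at this
  exact r.trans ⟨1, rfl⟩ this

lemma sameCycle_of_sameCycle_swap_mul {z w : α} (hz : ¬p.SameCycle z y) (hw : ¬p.SameCycle w y)
    (hzw : (swap x y * p).SameCycle z w) : p.SameCycle z w := by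
  classical
  let s := Perm.SameCycle.setoid p
  let f (z : α) : Quotient s := if p.SameCycle z y then ⟦x⟧ else ⟦z⟧
  have f_apply (z : α) : f (p z) = f z := by
    simp only [f, Perm.sameCycle_apply_left]
    congr 1
    exact Quotient.sound (Perm.sameCycle_apply_left.2 (.refl p z))
  have f_xy : f x = f y := by simp [f, Perm.SameCycle.refl]
  have f_eq : f z = f w := sameCycle_le (r := Setoid.ker f)
    (fun z => (f_apply z).symm.trans (rel_swap_apply (r := Setoid.ker f) f_xy _)) hzw
  simp only [f, if_neg hz, if_neg hw] at f_eq
  exact Quotient.exact f_eq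

lemma numCycles_swap_mul_add_one (h : ¬p.SameCycle x y) :
    numCycles (swap x y * p) + 1 = numCycles p :=
  card_quotient_add_one (fun _ _ => sameCycle_le_sameCycle_swap_mul h) (sameCycle_swap_mul h) h
    fun _ _ => sameCycle_of_sameCycle_swap_mul

lemma numCycles_swap_mul (hne : x ≠ y) (h : p.SameCycle x y) :
    numCycles (swap x y * p) = numCycles p + 1 := by
  rw [← numCycles_swap_mul_add_one (not_sameCycle_swap_mul hne h), swap_mul_self_mul]

end CycleCount

section PartialDessin

/-- The darts of a cubic dessin with `n` vertices: `(a, b)` is the `b`-th dart at the vertex `a`. -/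
abbrev Dart (n : ℕ) := Fin n × Fin 3

variable {n : ℕ}

/-- The rotation of the darts around their vertices, through which `Up` acts. -/
def rot : Perm (Dart n) := prodCongr (.refl _) (Equiv.addRight 1)

lemma rot_apply (d : Dart n) : rot d = (d.1, d.2 + 1) := rfl

lemma coe_swap_mul {α : Type*} [DecidableEq α] {t : Perm α} {x y : α} (hx : t x = x)
    (hy : t y = y) : ⇑(swap x y * t) = update (update t x y) y x := by
  ext d
  by_cases hdy : d = y
  · simp [hdy, hy]
  by_cases hdx : d = x
  · simp [hdx, hx, update_of_ne (hdx ▸ hdy : x ≠ y)]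
  rw [update_of_ne hdy, update_of_ne hdx, Perm.mul_apply, swap_apply_of_ne_of_ne]
  · exact fun h => hdx (t.injective (h.trans hx.symm))
  · exact fun h => hdy (t.injective (h.trans hy.symm))

lemma swap_mul_apply_eq_self_iff {α : Type*} [DecidableEq α] {t : Perm α} {x y d : α}
    (hx : t x = x) (hy : t y = y) (hxy : x ≠ y) :
    (swap x y * t) d = d ↔ d ≠ x ∧ d ≠ y ∧ t d = d := by
  rw [coe_swap_mul hx hy, update_apply, update_apply]
  split_ifs <;> grind

lemma involutive_swap_mul {α : Type*} [DecidableEq α] {t : Perm α} {x y : α}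
    (ht : Involutive t) (hx : t x = x) (hy : t y = y) : Involutive ⇑(swap x y * t) := by
  intro d
  have hdx : t d = x → d = x := fun h => t.injective (h.trans hx.symm)
  have hdy : t d = y → d = y := fun h => t.injective (h.trans hy.symm)
  have htd := ht d
  simp only [coe_swap_mul hx hy, update_apply]
  split_ifs <;> grind

/-- A partially glued cubic dessin with at most `n` vertices, rooted at the dart `(0, 0)`. -/
structure PartialDessin (n : ℕ) where
  /-- The number of vertices glued so far; these are the vertices `a < size`. -/
  size : ℕ
  /-- The darts of these vertices which are not glued yet. -/
  openDarts : List (Dart n)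
  /-- The gluing of the darts along edges, through which `Sp` acts. It fixes the darts which are not
  glued yet. -/
  glue : Perm (Dart n)
  /-- Elements of `PSL2Z` moving the dart `(0, 0)` to the darts `(a, 0)`. -/
  root : Fin n → PSL2Z

namespace PartialDessin

variable {s : PartialDessin n} {Γ : Subgroup PSL2Z} {x y d : Dart n} {l : List (Dart n)}
  {a : Fin n}

/-- The element of `PSL2Z` moving the dart `(0, 0)` to the dart `d`. -/
def word (s : PartialDessin n) (d : Dart n) : PSL2Z := Up ^ (d.2 : ℕ) * s.root d.1

/-- The coset of `Γ` corresponding to the dart `d`. -/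
def coset (s : PartialDessin n) (Γ : Subgroup PSL2Z) (d : Dart n) : PSL2Z ⧸ Γ := s.word d

lemma Up_mul_word (s : PartialDessin n) (d : Dart n) : Up * s.word d = s.word (rot d) := by
  obtain ⟨a, b⟩ := d
  simp only [word, rot_apply, ← mul_assoc, ← pow_succ']
  congr 1
  fin_cases b
  · rfl
  · rfl
  · exact (pow_succ Up 2).trans ((sq Up).symm ▸ Up_mul_Up_mul_Up)

lemma Up_smul_coset (s : PartialDessin n) (Γ : Subgroup PSL2Z) (d : Dart n) :
    Up • s.coset Γ d = s.coset Γ (rot d) :=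
  congrArg _ (s.Up_mul_word d)

/-- The partial dessin `s` is contained in the dessin of the subgroup `Γ`. -/
structure Embeds (s : PartialDessin n) (Γ : Subgroup PSL2Z) : Prop where
  injOn : Set.InjOn (s.coset Γ) {d | d.1 < s.size}
  Sp_smul : ∀ d : Dart n, d.1 < s.size → d ∉ s.openDarts →
    Sp • s.coset Γ d = s.coset Γ (s.glue d)

/-- The partial dessin obtained by gluing the open darts `x` and `y`, where `l` are the open darts
other than `x`. -/
@[simps]
def join (s : PartialDessin n) (x y : Dart n) (l : List (Dart n)) : PartialDessin n where
  size := s.size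
  openDarts := l.erase y
  glue := swap x y * s.glue
  root := s.root

/-- The partial dessin obtained by gluing the open dart `x` to a new vertex `a`, where `l` are the
open darts other than `x`. -/
@[simps]
def extend (s : PartialDessin n) (x : Dart n) (a : Fin n) (l : List (Dart n)) :
    PartialDessin n where
  size := s.size + 1
  openDarts := (a, 1) :: (a, 2) :: l
  glue := swap x (a, 0) * s.glue
  root := update s.root a (Sp * s.word x)

lemma coset_add (s : PartialDessin n) (Γ : Subgroup PSL2Z) (d : Dart n) (c : Fin 3) :
    s.coset Γ (d.1, d.2 + c) = Up ^ (c : ℕ) • s.coset Γ d := by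
  fin_cases c
  · simp
  · simp [Up_smul_coset, rot_apply]
  · change _ = Up ^ 2 • _
    rw [sq, mul_smul, Up_smul_coset, Up_smul_coset, rot_apply, rot_apply, add_assoc]
    rfl

lemma injective_coset_mk (hΓ : TorsionFree Γ) (s : PartialDessin n) (a : Fin n) :
    Injective fun b => s.coset Γ (a, b) := by
  have hrot (d) : s.coset Γ (rot d) ≠ s.coset Γ d :=
    s.Up_smul_coset Γ d ▸ (torsionFree_iff.1 hΓ).2 _
  intro b c (h : s.coset Γ (a, b) = s.coset Γ (a, c))
  obtain rfl | rfl | rfl : b = c ∨ b = c + 1 ∨ c = b + 1 := by clear h; decide +revert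
  · rfl
  · exact absurd h (hrot (a, c))
  · exact absurd h.symm (hrot (a, b))

lemma word_extend (ha : a = s.size) (hd : d.1 < s.size) :
    (s.extend x a l).word d = s.word d := by
  have : d.1 ≠ a := fun h => hd.ne (h ▸ ha)
  simp [word, this]

/-- The partial dessin consisting of a single vertex. -/
def start (n : ℕ) [NeZero n] : PartialDessin n where
  size := 1
  openDarts := [(0, 0), (0, 1), (0, 2)]
  glue := 1
  root := 1

lemma coset_extend (ha : a = s.size) (hd : d.1 < s.size) :
    (s.extend x a l).coset Γ d = s.coset Γ d :=
  congrArg _ (word_extend ha hd)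

lemma coset_extend_root : (s.extend x a l).coset Γ (a, 0) = Sp • s.coset Γ x := by
  simp [coset, word]

lemma injOn_coset_extend (hΓ : TorsionFree Γ) (ha : a = s.size)
    (hinj : Set.InjOn (s.coset Γ) {d | d.1 < s.size})
    (hx : ∀ d : Dart n, d.1 < s.size → Sp • s.coset Γ x ≠ s.coset Γ d) :
    Set.InjOn ((s.extend x a l).coset Γ) {d | d.1 < s.size + 1} := by
  have hne (b : Fin 3) (d : Dart n) (hd : d.1 < s.size) :
      (s.extend x a l).coset Γ (a, b) ≠ (s.extend x a l).coset Γ d := by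
    intro h
    refine hx (d.1, d.2 + -b) hd ?_
    rw [← coset_extend_root (a := a) (l := l), ← coset_extend (d := (d.1, d.2 + -b)) ha hd,
      coset_add, ← h, ← coset_add]
    simp
  have hlt (d : Dart n) (hd : d.1 < s.size + 1) : d.1 < s.size ∨ d.1 = a := by
    rw [Fin.ext_iff]
    omega
  rintro ⟨a₁, b⟩ hd ⟨a₂, c⟩ he h
  obtain hd | rfl := hlt _ hd <;> obtain he | rfl := hlt _ he
  · rw [coset_extend ha hd, coset_extend ha he] at h
    exact hinj hd he h
  · exact absurd h.symm (hne c _ hd)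
  · exact absurd h (hne b _ he)
  · exact congrArg _ (injective_coset_mk hΓ _ _ h)

/-- The invariants of the partial dessins obtained from a single vertex by gluing. -/
structure IsValid [NeZero n] (s : PartialDessin n) : Prop where
  size_le : s.size ≤ n
  size_pos : 0 < s.size
  nodup : s.openDarts.Nodup
  lt_of_mem : ∀ d ∈ s.openDarts, d.1 < s.size
  glue_involutive : Involutive s.glue
  glue_eq_self_iff : ∀ d : Dart n, s.glue d = d ↔ d.1 < s.size → d ∈ s.openDarts
  root_zero : s.root 0 = 1
  root_eq : ∀ a : Fin n, a ≠ 0 → a < s.size →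
    (s.glue (a, 0)).1 < a ∧ s.root a = Sp * s.word (s.glue (a, 0))

namespace IsValid

variable [NeZero n] (hs : s.IsValid)
include hs

lemma glue_eq_self (hd : d ∈ s.openDarts) : s.glue d = d := (hs.glue_eq_self_iff d).2 fun _ => hd

lemma glue_eq_self_of_le (hd : s.size ≤ d.1) : s.glue d = d :=
  (hs.glue_eq_self_iff d).2 fun h => absurd h hd.not_gt

lemma glue_lt (hd : d.1 < s.size) : (s.glue d).1 < s.size := by
  by_contra! h
  have := hs.glue_eq_self_of_le h
  rw [hs.glue_involutive] at this
  exact h.not_gt (this ▸ hd)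

lemma coset_zero (Γ : Subgroup PSL2Z) : s.coset Γ (0, 0) = (1 : PSL2Z) := by
  simp [coset, word, hs.root_zero]

lemma lt_size (hL : s.openDarts = x :: l) : x.1 < s.size := hs.lt_of_mem x (by simp [hL])

lemma ne_of_mem (hL : s.openDarts = x :: l) (hd : d ∈ l) : x ≠ d :=
  fun h => (List.nodup_cons.1 (hL ▸ hs.nodup)).1 (h ▸ hd)

lemma root_ne (ha : a ≠ 0) (has : a < s.size) (hd : s.glue d = d) : (a, 0) ≠ d :=
  fun h => (hs.root_eq a ha has).1.ne (by rw [h, hd, ← h])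

lemma coe_glue_join (hL : s.openDarts = x :: l) (hy : y ∈ l) :
    ⇑(s.join x y l).glue = update (update s.glue x y) y x :=
  coe_swap_mul (hs.glue_eq_self (by simp [hL])) (hs.glue_eq_self (by simp [hL, hy]))

lemma coe_glue_extend (hL : s.openDarts = x :: l) (ha : a = s.size) :
    ⇑(s.extend x a l).glue = update (update s.glue x (a, 0)) (a, 0) x :=
  coe_swap_mul (hs.glue_eq_self (by simp [hL])) (hs.glue_eq_self_of_le ha.ge)

lemma join (hL : s.openDarts = x :: l) (hy : y ∈ l) : (s.join x y l).IsValid where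
  size_le := hs.size_le
  size_pos := hs.size_pos
  nodup := (List.nodup_cons.1 (hL ▸ hs.nodup)).2.erase y
  lt_of_mem d hd := hs.lt_of_mem d (by simp [hL, List.mem_of_mem_erase hd])
  glue_involutive := involutive_swap_mul hs.glue_involutive (hs.glue_eq_self (by simp [hL]))
    (hs.glue_eq_self (by simp [hL, hy]))
  glue_eq_self_iff d := by
    have hnodup := List.nodup_cons.1 (hL ▸ hs.nodup)
    have hx := hs.lt_size hL
    have hy' := hs.lt_of_mem y (by simp [hL, hy])
    have hd := hs.glue_eq_self_iff d
    rw [hL, List.mem_cons] at hd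
    simp only [join_size, join_openDarts, join_glue, hnodup.2.mem_erase_iff]
    rw [swap_mul_apply_eq_self_iff (hs.glue_eq_self (by simp [hL]))
      (hs.glue_eq_self (by simp [hL, hy])) (hs.ne_of_mem hL hy), hd]
    grind
  root_zero := hs.root_zero
  root_eq a ha h := by
    have hax := hs.root_ne ha h (d := x) (hs.glue_eq_self (by simp [hL]))
    have hay := hs.root_ne ha h (d := y) (hs.glue_eq_self (by simp [hL, hy]))
    rw [hs.coe_glue_join hL hy, update_of_ne hay, update_of_ne hax]
    exact hs.root_eq a ha h

lemma glue_extend_eq_self_iff (hL : s.openDarts = x :: l) (ha : a = s.size) (d : Dart n) :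
    (s.extend x a l).glue d = d ↔
      d.1 < (s.extend x a l).size → d ∈ (s.extend x a l).openDarts := by
  obtain ⟨b, i⟩ := d
  have hx := hs.lt_size hL
  have hxl := (List.nodup_cons.1 (hL ▸ hs.nodup)).1
  have hxa : x ≠ (a, 0) := fun h => hx.ne (h ▸ ha)
  have hd := hs.glue_eq_self_iff (b, i)
  have hlt := hs.lt_of_mem (b, i)
  rw [hL, List.mem_cons] at hd hlt
  simp only [extend_size, extend_openDarts, extend_glue, List.mem_cons]
  rw [swap_mul_apply_eq_self_iff (hs.glue_eq_self (by simp [hL]))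
    (hs.glue_eq_self_of_le ha.ge) hxa, hd]
  obtain rfl | hba := eq_or_ne b a
  · fin_cases i <;> grind
  · have := Fin.val_ne_of_ne hba
    grind

lemma extend (hL : s.openDarts = x :: l) (ha : a = s.size) : (s.extend x a l).IsValid where
  size_le := show s.size < n from ha ▸ a.2
  size_pos := s.size.succ_pos
  nodup := by
    have hnodup := List.nodup_cons.1 (hL ▸ hs.nodup)
    have hl (b) : (a, b) ∉ l := fun h => (hs.lt_of_mem (a, b) (by simp [hL, h])).ne ha
    simp [hnodup.2, hl]
  lt_of_mem d hd := by
    have hlt := fun h : d ∈ l => hs.lt_of_mem d (by simp [hL, h])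
    simp only [extend_size, extend_openDarts, List.mem_cons] at hd ⊢
    grind
  glue_involutive := involutive_swap_mul hs.glue_involutive (hs.glue_eq_self (by simp [hL]))
    (hs.glue_eq_self_of_le ha.ge)
  glue_eq_self_iff := hs.glue_extend_eq_self_iff hL ha
  root_zero := by
    have : (0 : Fin n) ≠ a := fun h => hs.size_pos.ne (by simpa [← h] using ha)
    simp [this, hs.root_zero]
  root_eq b hb h := by
    rw [hs.coe_glue_extend hL ha]
    obtain rfl | hba := eq_or_ne b a
    · have hx := hs.lt_size hL
      rw [update_self, word_extend ha hx]
      exact ⟨hx.trans_eq ha.symm, by simp⟩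
    · have hbs : b < s.size := by
        have := Fin.val_ne_of_ne hba
        rw [extend_size] at h
        omega
      have hbx := hs.root_ne hb hbs (d := x) (hs.glue_eq_self (by simp [hL]))
      obtain ⟨hlt, hroot⟩ := hs.root_eq b hb hbs
      rw [update_of_ne (by simpa using hba), update_of_ne hbx,
        word_extend ha ((Fin.lt_def.1 hlt).trans hbs)]
      exact ⟨hlt, by rw [← hroot]; simp [hba]⟩

end IsValid

lemma isValid_start (n : ℕ) [NeZero n] : (start n).IsValid where
  size_le := NeZero.one_le
  size_pos := one_pos
  nodup := by simp [start]
  lt_of_mem d hd := by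
    simp only [start, List.mem_cons, List.not_mem_nil, or_false] at hd
    obtain rfl | rfl | rfl := hd <;> exact one_pos
  glue_involutive _ := rfl
  glue_eq_self_iff d := by
    obtain ⟨a, b⟩ := d
    simp only [start, Perm.one_apply, Nat.lt_one_iff, Fin.val_eq_zero_iff, true_iff]
    rintro rfl
    fin_cases b <;> simp
  root_zero := rfl
  root_eq a ha h := absurd (Fin.val_eq_zero_iff.1 (Nat.lt_one_iff.1 h)) ha

variable [NeZero n]

lemma IsValid.join_embeds_iff (hs : s.IsValid) (hL : s.openDarts = x :: l) (hy : y ∈ l) :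
    (s.join x y l).Embeds Γ ↔ s.Embeds Γ ∧ Sp • s.coset Γ x = s.coset Γ y := by
  have hnodup := List.nodup_cons.1 (hL ▸ hs.nodup)
  have hxy := hs.ne_of_mem hL hy
  have hglue := hs.coe_glue_join hL hy
  constructor
  · refine fun h => ⟨⟨h.injOn, fun d hd hds => ?_⟩, ?_⟩
    · have hdl : d ∉ l := fun h => hds (by simp [hL, h])
      have hdx : d ≠ x := fun h => hds (by simp [hL, h])
      have := h.Sp_smul d hd (mt List.mem_of_mem_erase hdl)
      rwa [hglue, update_of_ne (ne_of_mem_of_not_mem hy hdl).symm, update_of_ne hdx] at this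
    · have := h.Sp_smul x (hs.lt_size hL) (mt List.mem_of_mem_erase hnodup.1)
      rwa [hglue, update_of_ne hxy, update_self] at this
  · refine fun ⟨h, hSp⟩ => ⟨h.injOn, fun d hd hds => ?_⟩
    change Sp • s.coset Γ d = s.coset Γ ((s.join x y l).glue d)
    rw [hglue]
    obtain rfl | hdy := eq_or_ne d y
    · rw [update_self, ← hSp, ← mul_smul, Sp_mul_Sp, one_smul]
    obtain rfl | hdx := eq_or_ne d x
    · rw [update_of_ne hdy, update_self, hSp]
    rw [update_of_ne hdy, update_of_ne hdx]
    refine h.Sp_smul d hd fun hmem => hds ?_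
    rw [hL, List.mem_cons] at hmem
    exact (List.mem_erase_of_ne hdy).2 (hmem.resolve_left hdx)

lemma IsValid.embeds_of_embeds_extend (hs : s.IsValid) (hL : s.openDarts = x :: l)
    (ha : a = s.size) (h : (s.extend x a l).Embeds Γ) : s.Embeds Γ where
  injOn d hd e he hde := h.injOn (Nat.lt_succ_of_lt hd) (Nat.lt_succ_of_lt he)
    (by rwa [coset_extend ha hd, coset_extend ha he])
  Sp_smul d hd hds := by
    have hne (b) : d ≠ (a, b) := fun h => hd.ne (h ▸ ha)
    have hdx : d ≠ x := fun h => hds (by simp [hL, h])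
    have hds' : d ∉ (s.extend x a l).openDarts := by
      simp only [extend_openDarts, List.mem_cons, not_or]
      exact ⟨hne 1, hne 2, fun h => hds (by simp [hL, h])⟩
    have := h.Sp_smul d (Nat.lt_succ_of_lt hd) hds'
    rwa [hs.coe_glue_extend hL ha, update_of_ne (hne 0), update_of_ne hdx, coset_extend ha hd,
      coset_extend ha (hs.glue_lt hd)] at this

lemma IsValid.extend_embeds_iff (hs : s.IsValid) (hΓ : TorsionFree Γ) (hL : s.openDarts = x :: l)
    (ha : a = s.size) : (s.extend x a l).Embeds Γ ↔
      s.Embeds Γ ∧ ∀ d : Dart n, d.1 < s.size → Sp • s.coset Γ x ≠ s.coset Γ d := by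
  have hx := hs.lt_size hL
  constructor
  · refine fun h => ⟨hs.embeds_of_embeds_extend hL ha h, fun d hd hde => ?_⟩
    rw [← coset_extend (x := x) (l := l) ha hd, ← coset_extend_root (a := a) (l := l)] at hde
    have := h.injOn (Nat.lt_succ_of_lt hd) (Nat.lt_succ_of_le ha.le) hde.symm
    exact hd.ne (this ▸ ha)
  · refine fun ⟨h, hSp⟩ => ⟨injOn_coset_extend hΓ ha h.injOn hSp, fun d hd hds => ?_⟩
    rw [hs.coe_glue_extend hL ha]
    obtain rfl | hda := eq_or_ne d (a, 0)
    · rw [update_self, coset_extend_root, coset_extend ha hx, ← mul_smul, Sp_mul_Sp, one_smul]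
    obtain rfl | hdx := eq_or_ne d x
    · rw [update_of_ne hda, update_self, coset_extend ha hx, coset_extend_root]
    simp only [extend_openDarts, List.mem_cons, not_or] at hds
    have hd : d.1 < s.size := by
      refine (Nat.lt_succ_iff_lt_or_eq.1 hd).resolve_right fun hd => ?_
      obtain ⟨b, i⟩ := d
      obtain rfl := Fin.ext (hd.trans ha.symm)
      fin_cases i <;> simp_all
    rw [update_of_ne hda, update_of_ne hdx, coset_extend ha hd, coset_extend ha (hs.glue_lt hd),
      h.Sp_smul d hd (by simp [hL, hdx, hds.2.2])]

lemma IsValid.mem_of_Sp_smul_coset (hs : s.IsValid) (hΓ : TorsionFree Γ) (h : s.Embeds Γ)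
    (hL : s.openDarts = x :: l) (hd : d.1 < s.size) (hx : Sp • s.coset Γ x = s.coset Γ d) :
    d ∈ l := by
  have hxd : d ≠ x := by
    rintro rfl
    exact (torsionFree_iff.1 hΓ).1 _ hx
  suffices d ∈ s.openDarts by simpa [hL, hxd] using this
  by_contra hds
  have hglue : s.coset Γ x = s.coset Γ (s.glue d) := by
    rw [← h.Sp_smul d hd hds, ← hx, ← mul_smul, Sp_mul_Sp, one_smul]
  have := h.injOn (hs.lt_size hL) (hs.glue_lt hd) hglue
  rw [← hs.glue_eq_self (d := x) (by simp [hL])] at this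
  exact hxd (s.glue.injective this).symm

end PartialDessin

end PartialDessin

lemma nOrb_stabilizer_eq_numCycles {X : Type*} [MulAction PSL2Z X] [IsPretransitive PSL2Z X]
    (g : PSL2Z) (x : X) : nOrb g (stabilizer PSL2Z x) = numCycles (toPerm g : Perm X) := by
  rw [nOrb_stabilizer]
  refine Nat.card_congr (Quotient.congrRight fun y z => ?_)
  rw [orbitRel_apply, ← mem_orbit_symm]
  rw [mem_orbit_iff, Subgroup.exists_zpowers]
  refine exists_congr fun i => ?_
  rw [← toPermHom_apply, ← map_zpow]
  rfl

lemma index_stabilizer_dart {n : ℕ} [MulAction PSL2Z (Dart n)] [IsPretransitive PSL2Z (Dart n)]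
    (d : Dart n) : (stabilizer PSL2Z d).index = 3 * n := by
  rw [index_stabilizer_of_transitive]
  simp [mul_comm]

section Closed

namespace PartialDessin

variable {n : ℕ} [NeZero n] {s : PartialDessin n} {Γ : Subgroup PSL2Z}

namespace IsValid

variable (hs : s.IsValid)
include hs

lemma size_eq_of_embeds (hL : s.openDarts = []) (h : s.Embeds Γ) (hΓ : Γ.index = 3 * n) :
    s.size = n := by
  have hsurj (q : PSL2Z ⧸ Γ) : ∃ d : Dart n, d.1 < s.size ∧ s.coset Γ d = q := by
    obtain ⟨g, rfl⟩ := QuotientGroup.mk_surjective q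
    induction g using PSL2Z_induction with
    | one => exact ⟨(0, 0), hs.size_pos, hs.coset_zero Γ⟩
    | Sp_mul g ih =>
      obtain ⟨d, hd, hg⟩ := ih
      exact ⟨s.glue d, hs.glue_lt hd, by rw [← h.Sp_smul d hd (by simp [hL]), hg]; rfl⟩
    | Up_mul g ih =>
      obtain ⟨d, hd, hg⟩ := ih
      exact ⟨rot d, hd, by rw [← Up_smul_coset, hg]; rfl⟩
  have hinj : Injective (s.coset Γ) := by
    refine (Surjective.bijective_of_nat_card_le (fun q => (hsurj q).imp fun _ => And.right) ?_).1
    rw [← Subgroup.index, hΓ]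
    simp [mul_comm]
  refine hs.size_le.antisymm (not_lt.1 fun hlt => ?_)
  obtain ⟨d, hd, hq⟩ := hsurj (s.coset Γ (⟨s.size, hlt⟩, 0))
  rw [hinj hq] at hd
  exact hd.false

variable [MulAction PSL2Z (Dart n)] (hn : s.size = n) (hSp : ∀ d : Dart n, Sp • d = s.glue d)
  (hUp : ∀ d : Dart n, Up • d = rot d)
include hn hSp hUp

lemma word_smul (d : Dart n) : s.word d • ((0, 0) : Dart n) = d := by
  have smul_of_root {a : Fin n} (h : s.root a • ((0, 0) : Dart n) = (a, 0)) (b : Fin 3) :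
      s.word (a, b) • ((0, 0) : Dart n) = (a, b) := by
    rw [word, mul_smul, h]
    fin_cases b <;> simp [sq, mul_smul, hUp, rot_apply]
  obtain ⟨a, b⟩ := d
  induction a using WellFoundedLT.induction generalizing b with
  | ind a ih =>
    refine smul_of_root ?_ b
    obtain rfl | ha := eq_or_ne a 0
    · rw [hs.root_zero, one_smul]
    obtain ⟨hlt, hroot⟩ := hs.root_eq a ha (a.2.trans_eq hn.symm)
    rw [hroot, mul_smul, ih _ hlt, hSp, hs.glue_involutive]

lemma isPretransitive : IsPretransitive PSL2Z (Dart n) :=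
  ⟨fun d e => ⟨s.word e * (s.word d)⁻¹, by
    rw [mul_smul, inv_smul_eq_iff.2 (hs.word_smul hn hSp hUp d).symm,
      hs.word_smul hn hSp hUp]⟩⟩

lemma embeds_iff_eq_stabilizer (hL : s.openDarts = []) :
    s.Embeds Γ ↔ Γ = stabilizer PSL2Z ((0, 0) : Dart n) := by
  constructor
  · intro h
    have hlt (d : Dart n) : d.1 < s.size := d.1.2.trans_eq hn.symm
    have smul_coset (g : PSL2Z) : ∀ d : Dart n, g • s.coset Γ d = s.coset Γ (g • d) := by
      induction g using PSL2Z_induction with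
      | one => simp
      | Sp_mul g ih =>
        intro d
        rw [mul_smul, ih, mul_smul, hSp, h.Sp_smul _ (hlt _) (by simp [hL])]
      | Up_mul g ih =>
        intro d
        rw [mul_smul Up, ih, mul_smul Up, hUp, Up_smul_coset]
    ext g
    have hinj : Injective (s.coset Γ) := fun d e =>
      @h.injOn d (hlt d) e (hlt e)
    rw [mem_stabilizer_iff, ← hinj.eq_iff, ← smul_coset, hs.coset_zero, ← mem_stabilizer_iff,
      stabilizer_quotient]
  · rintro rfl
    have := hs.isPretransitive hn hSp hUp
    have apply_coset (d : Dart n) :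
        cosetEquiv (0, 0) (s.coset (stabilizer PSL2Z ((0, 0) : Dart n)) d) = d :=
      hs.word_smul hn hSp hUp d
    refine ⟨fun d _ e _ h => ?_, fun d _ _ => (cosetEquiv ((0, 0) : Dart n)).injective ?_⟩
    · rw [← apply_coset d, h, apply_coset]
    · rw [cosetEquiv_smul, apply_coset, apply_coset, hSp]

end IsValid

end PartialDessin

end Closed

section Euler

namespace PartialDessin

variable {n : ℕ} {s : PartialDessin n} {Γ : Subgroup PSL2Z} {x y : Dart n}
  {l : List (Dart n)} {a : Fin n} {e : ℕ}

/-- The permutation of the darts through which `Tp` acts; its cycles are the faces. -/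
def face (s : PartialDessin n) : Perm (Dart n) := s.glue * rot

lemma face_join : (s.join x y l).face = swap x y * s.face := mul_assoc _ _ _

lemma face_extend : (s.extend x a l).face = swap x (a, 0) * s.face := mul_assoc _ _ _

lemma edges_join (hL : s.openDarts = x :: l) (hy : y ∈ l)
    (he : 3 * s.size + 2 * (e + 1) = s.openDarts.length + 3 * n) :
    3 * (s.join x y l).size + 2 * e = (s.join x y l).openDarts.length + 3 * n := by
  have := List.length_erase_add_one hy
  simp only [hL, List.length_cons, join_size, join_openDarts] at he ⊢
  omega

lemma edges_extend (hL : s.openDarts = x :: l)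
    (he : 3 * s.size + 2 * (e + 1) = s.openDarts.length + 3 * n) :
    3 * (s.extend x a l).size + 2 * e = (s.extend x a l).openDarts.length + 3 * n := by
  simp only [hL, List.length_cons, extend_size, extend_openDarts] at he ⊢
  omega

lemma toPerm_Tp [MulAction PSL2Z (Dart n)] (hSp : ∀ d : Dart n, Sp • d = s.glue d)
    (hUp : ∀ d : Dart n, Up • d = rot d) : (toPerm Tp : Perm (Dart n)) = s.face := by
  ext d : 1
  rw [toPerm_apply, Tp_eq_Sp_mul_Up, mul_smul Sp Up, hUp, hSp]
  rfl

variable [NeZero n]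

lemma IsValid.not_sameCycle_face (hs : s.IsValid) (hL : s.openDarts = x :: l) (ha : a = s.size) :
    ¬s.face.SameCycle x (a, 0) := by
  have face_mk (b : Fin 3) : s.face (a, b) = (a, b + 1) := hs.glue_eq_self_of_le ha.ge
  have face_pow (k : ℕ) : ∃ b, (s.face ^ k) (a, 0) = (a, b) := by
    induction k with
    | zero => exact ⟨0, rfl⟩
    | succ k ih =>
      obtain ⟨b, hb⟩ := ih
      exact ⟨b + 1, by rw [pow_succ', Perm.mul_apply, hb, face_mk]⟩
  have face_pow_three : (s.face ^ 3) (a, 0) = (a, 0) := by simp [pow_succ, face_mk]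
  refine fun h => not_sameCycle_of_return three_pos face_pow_three (fun j _ hj => ?_) h.symm
  obtain ⟨b, hb⟩ := face_pow j
  rw [hb] at hj
  exact (hs.lt_size hL).ne (hj ▸ ha)

lemma IsValid.exists_embeds (hs : s.IsValid) (hΓ : TorsionFree Γ) (hind : Γ.index = 3 * n)
    (he : 3 * s.size + 2 * (e + 1) = s.openDarts.length + 3 * n) (h : s.Embeds Γ) :
    ∃ x l, s.openDarts = x :: l ∧ ((∃ y ∈ l, (s.join x y l).Embeds Γ) ∨
      ∃ a : Fin n, a = s.size ∧ (s.extend x a l).Embeds Γ) := by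
  rcases hL : s.openDarts with _ | ⟨x, l⟩
  · rw [hs.size_eq_of_embeds hL h hind, hL, List.length_nil] at he
    omega
  refine ⟨x, l, rfl, ?_⟩
  by_cases hx : ∃ d : Dart n, d.1 < s.size ∧ Sp • s.coset Γ x = s.coset Γ d
  · obtain ⟨d, hd, hxd⟩ := hx
    have hdl := hs.mem_of_Sp_smul_coset hΓ h hL hd hxd
    exact .inl ⟨d, hdl, (hs.join_embeds_iff hL hdl).2 ⟨h, hxd⟩⟩
  · push Not at hx
    suffices hlt : s.size < n from
      .inr ⟨⟨s.size, hlt⟩, rfl, (hs.extend_embeds_iff hΓ hL rfl).2 ⟨h, hx⟩⟩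
    refine hs.size_le.lt_of_ne fun hn => ?_
    have hinj : Injective (s.coset Γ) := fun d e =>
      @h.injOn d (d.1.2.trans_eq hn.symm) e (e.1.2.trans_eq hn.symm)
    have : Γ.FiniteIndex := ⟨by rw [hind]; exact mul_ne_zero three_ne_zero (NeZero.ne n)⟩
    have hsurj := (hinj.bijective_of_nat_card_le (by
      rw [← Subgroup.index, hind]; simp [mul_comm])).2
    obtain ⟨d, hd⟩ := hsurj (Sp • s.coset Γ x)
    exact hx d (d.1.2.trans_eq hn.symm) hd.symm

lemma IsValid.exists_action (hs : s.IsValid) : ∃ _ : MulAction PSL2Z (Dart n),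
    (∀ d : Dart n, Sp • d = s.glue d) ∧ ∀ d : Dart n, Up • d = rot d := by
  have hglue : s.glue * s.glue = 1 := Equiv.ext hs.glue_involutive
  have hrot : (rot * rot * rot : Perm (Dart n)) = 1 := by
    ext d : 1
    simp [rot_apply, add_assoc]
  obtain ⟨ρ, hSp, hUp⟩ := exists_hom_Sp_Up hglue hrot
  exact ⟨.compHom _ ρ, fun d => congrArg (· d) hSp, fun d => congrArg (· d) hUp⟩

lemma size_eq_and_openDarts_eq_nil (hs : s.IsValid)
    (he : 3 * s.size + 2 * 0 = s.openDarts.length + 3 * n) :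
    s.size = n ∧ s.openDarts = [] := by
  have := hs.size_le
  exact ⟨by omega, List.length_eq_zero_iff.1 (by omega)⟩

lemma IsValid.nOrb_Tp_eq_numCycles_face (hs : s.IsValid) (hn : s.size = n)
    (hL : s.openDarts = []) (h : s.Embeds Γ) : nOrb Tp Γ = numCycles s.face := by
  obtain ⟨_, hSp, hUp⟩ := hs.exists_action
  have := hs.isPretransitive hn hSp hUp
  rw [(hs.embeds_iff_eq_stabilizer hn hSp hUp hL).1 h, nOrb_stabilizer_eq_numCycles,
    toPerm_Tp hSp hUp]

/-- An upper bound for the number of faces of the dessins extending `s` by `e` further edges, up to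
a shift by twice the number of vertices. -/
noncomputable def euler (s : PartialDessin n) (e : ℕ) : ℕ := numCycles s.face + e + 2 * s.size

lemma IsValid.euler_join (hs : s.IsValid) (hL : s.openDarts = x :: l) (hy : y ∈ l)
    (h : s.face.SameCycle x y) : (s.join x y l).euler e = s.euler (e + 1) := by
  simp only [euler, face_join, numCycles_swap_mul (hs.ne_of_mem hL hy) h, join_size]
  omega

omit [NeZero n] in
lemma euler_join_add_two (h : ¬s.face.SameCycle x y) :
    (s.join x y l).euler e + 2 = s.euler (e + 1) := by
  simp only [euler, face_join, ← numCycles_swap_mul_add_one h, join_size]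
  omega

lemma IsValid.euler_extend (hs : s.IsValid) (hL : s.openDarts = x :: l) (ha : a = s.size) :
    (s.extend x a l).euler e = s.euler (e + 1) := by
  simp only [euler, face_extend, extend_size,
    ← numCycles_swap_mul_add_one (hs.not_sameCycle_face hL ha)]
  omega

lemma IsValid.nOrb_Tp_le_euler (hΓ : TorsionFree Γ) (hind : Γ.index = 3 * n) (hs : s.IsValid)
    (he : 3 * s.size + 2 * e = s.openDarts.length + 3 * n) (h : s.Embeds Γ) :
    nOrb Tp Γ + 2 * n ≤ s.euler e := by
  induction e generalizing s with
  | zero =>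
    obtain ⟨hn, hL⟩ := size_eq_and_openDarts_eq_nil hs he
    rw [hs.nOrb_Tp_eq_numCycles_face hn hL h, euler, hn, add_zero]
  | succ e ih =>
    obtain ⟨x, l, hL, ⟨y, hy, h⟩ | ⟨a, ha, h⟩⟩ := hs.exists_embeds hΓ hind he h
    · have hle := ih (hs.join hL hy) (edges_join hL hy he) h
      by_cases hxy : s.face.SameCycle x y
      · rwa [hs.euler_join hL hy hxy] at hle
      · exact hle.trans ((Nat.le_add_right _ 2).trans_eq (euler_join_add_two hxy))
    · exact (ih (hs.extend hL ha) (edges_extend hL he) h).trans_eq (hs.euler_extend hL ha)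

end PartialDessin

end Euler

section Search

/-- The base-`N` digit of `t` at position `x`. A map `f` from darts to darts is encoded by the
number `t` whose digits are the codes `f x`. -/
def entry (N t x : ℕ) : ℕ := (t.div (Nat.pow N x)).mod N

/-- Exchanges the digits `x` and `y` at the positions `x` and `y`. -/
def joinCode (N t x y : ℕ) : ℕ := t + y * N ^ x + x * N ^ y - (x * N ^ x + y * N ^ y)

/-- The permutation `rot` on codes of darts. -/
def rotCode (d : ℕ) : ℕ := bif (d % 3).beq 2 then d - 2 else d + 1

/-- The face permutation on codes of darts, where `t` encodes the gluing. -/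
def faceCode (N t d : ℕ) : ℕ := entry N t (rotCode d)

/-- Whether the face of `d` reaches `y` in fewer than `k` steps without passing through `x`. -/
def reaches (N t x y : ℕ) : (k d : ℕ) → Bool
  | 0, _ => false
  | k + 1, d => d.beq y || !d.beq x && reaches N t x y k (faceCode N t d)

/-- The weighted number of closed genus zero dessins obtained by gluing `e` more edges to a partial
dessin with `k` vertices, gluing `t` and open darts `l`, a closed dessin with gluing `t'` having
weight `w t'`. The first open dart is glued to an open dart on its face, which splits this face, or
to a dart of a new vertex. -/
def search (N : ℕ) (w : ℕ → ℕ) : (e k : ℕ) → (l : List ℕ) → (t : ℕ) → ℕ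
  | 0, _, _, t => w t
  | _ + 1, _, [], _ => 0
  | e + 1, k, x :: l, t =>
    (l.map fun y => bif reaches N t x y N (faceCode N t x) then
        search N w e k (l.erase y) (joinCode N t x y) else 0).sum +
      bif (3 * k).blt N then
        search N w e (k + 1) ((3 * k + 1) :: (3 * k + 2) :: l) (joinCode N t x (3 * k)) else 0

/-- Whether the gluing encoded by `t` commutes at `d` with the map encoded by `u`, provided it moves
`d` to a smaller dart. -/
def commutesAt (N t u d : ℕ) : Bool :=
  d.ble (entry N t d) || (entry N t (entry N u d)).beq (entry N u (entry N t d))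

/-- Whether the map encoded by `u` on the darts below `d` extends to the three darts of each of the
next `k` vertices so that it commutes with `rotCode` and with the gluing encoded by `t`: it maps `d`
to `v`, and the image of the first dart of any further vertex is forced by the gluing. -/
def lifts (N t : ℕ) : (k d v u : ℕ) → Bool
  | 0, _, _, _ => true
  | k + 1, d, v, u =>
    let u := u + v * N ^ d + rotCode v * N ^ (d + 1) + rotCode (rotCode v) * N ^ (d + 2)
    commutesAt N t u d && commutesAt N t u (d + 1) && commutesAt N t u (d + 2) &&
      lifts N t k (d + 3) (entry N t (entry N u (entry N t (d + 3)))) u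

/-- The number of automorphisms of the dessin with gluing `t`: the darts `v` for which some
automorphism maps the root `0` to `v`. -/
def numLifts (N t : ℕ) : ℕ := (List.range N).countP fun v => lifts N t (N / 3) 0 v 0

/-- The number of loops of the dessin with gluing `t`. -/
def numLoops (N t : ℕ) : ℕ := (List.range N).countP fun d => (faceCode N t d).beq d

/-- The value of `subgroupWeight` on the subgroup of a rooted dessin, in terms of its gluing `t`. -/
def weight (B N t : ℕ) : ℕ :=
  bif (numLoops N t).beq 0 || (faceCode N t 0).beq 0 then
    numLifts N t * (B ^ numLoops N t + B ^ (N + 1)) else 0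

/-- The code of the gluing that fixes all darts, i.e. in which all of them are open. -/
def idCode (N : ℕ) : ℕ := ((List.range N).map fun d => d * N ^ d).sum

lemma search_eq : search 24 (weight 10000 24) 12 1 [0, 1, 2] (idCode 24) =
    Nat.ofDigits 10000 [480, 45, 142, 120, 56, 5] + 848 * 10000 ^ 25 := by
  decide +kernel

end Search

section Encoding

variable {n : ℕ}

/-- The number encoding a dart. -/
def code (d : Dart n) : ℕ := finProdFinEquiv d

/-- The number encoding a map from darts to darts: its base-`n * 3` digit at the position `code d`
is `code (f d)`. -/
def pack (f : Dart n → Dart n) : ℕ :=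
  finFunctionFinEquiv fun i => finProdFinEquiv (f (finProdFinEquiv.symm i))

lemma code_mk (a : Fin n) (b : Fin 3) : code (a, b) = b + 3 * a := rfl

lemma code_injective : Injective (code : Dart n → ℕ) :=
  Fin.val_injective.comp finProdFinEquiv.injective

lemma sum_code (g : ℕ → ℕ) : ∑ d : Dart n, g (code d) = ∑ i ∈ range (n * 3), g i := by
  rw [Finset.sum_range]
  exact finProdFinEquiv.sum_comp fun i : Fin (n * 3) => g i

lemma card_code (p : ℕ → Bool) :
    (List.range (n * 3)).countP p = Nat.card {d : Dart n // p (code d)} := by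
  rw [Nat.card_eq_fintype_card, Fintype.card_subtype, card_filter,
    sum_code fun i => if p i then 1 else 0, ← card_filter, ← Nat.count_eq_card_filter_range]
  simp [Nat.count]

lemma pack_eq_sum (f : Dart n → Dart n) :
    pack f = ∑ d, code (f d) * (n * 3) ^ code d := by
  rw [pack, finFunctionFinEquiv_apply, ← finProdFinEquiv.sum_comp]
  simp [code]

lemma entry_pack (f : Dart n → Dart n) (d : Dart n) :
    entry (n * 3) (pack f) (code d) = code (f d) := by
  have := congrFun (finFunctionFinEquiv.symm_apply_apply fun i : Fin (n * 3) =>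
    finProdFinEquiv (f (finProdFinEquiv.symm i))) (finProdFinEquiv d)
  rw [finProdFinEquiv.symm_apply_apply] at this
  exact congrArg Fin.val this

lemma pack_update (f : Dart n → Dart n) (x v : Dart n) :
    pack (update f x v) + code (f x) * (n * 3) ^ code x =
      pack f + code v * (n * 3) ^ code x := by
  have (d) (hd : d ∈ univ.erase x) : update f x v d = f d := update_of_ne (ne_of_mem_erase hd) v f
  simp only [pack_eq_sum, ← add_sum_erase _ _ (mem_univ x), update_self]
  rw [sum_congr rfl fun d hd => by rw [this d hd]]
  ring

lemma joinCode_pack {f : Dart n → Dart n} {x y : Dart n} (hx : f x = x) (hy : f y = y)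
    (hxy : x ≠ y) :
    joinCode (n * 3) (pack f) (code x) (code y) = pack (update (update f x y) y x) := by
  have h₁ := pack_update f x y
  have h₂ := pack_update (update f x y) y x
  rw [update_of_ne hxy.symm, hy] at h₂
  rw [hx] at h₁
  rw [joinCode]
  omega

lemma rotCode_code (d : Dart n) : rotCode (code d) = code (rot d) := by
  obtain ⟨a, b⟩ := d
  rw [rot_apply, code_mk, code_mk, rotCode, Nat.add_mul_mod_self_left]
  fin_cases b
  · exact Nat.add_right_comm _ _ _
  · exact Nat.add_right_comm _ _ _
  · exact (Nat.add_sub_cancel_left 2 (3 * (a : ℕ))).trans (Nat.zero_add _).symm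

lemma faceCode_pack (s : PartialDessin n) (d : Dart n) :
    faceCode (n * 3) (pack s.glue) (code d) = code (s.face d) := by
  rw [faceCode, rotCode_code, entry_pack]
  rfl

lemma reaches_pack_iff {s : PartialDessin n} {x y : Dart n} (k : ℕ) (d : Dart n) :
    reaches (n * 3) (pack s.glue) (code x) (code y) k (code d) ↔
      ∃ j < k, (s.face ^ j) d = y ∧ ∀ i < j, (s.face ^ i) d ≠ x := by
  induction k generalizing d with
  | zero => simp [reaches]
  | succ k ih =>
    have beq_code (e : Dart n) : (code d).beq (code e) = true ↔ d = e :=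
      (iff_of_eq Nat.beq_eq).trans code_injective.eq_iff
    simp only [reaches, faceCode_pack, Bool.or_eq_true, Bool.and_eq_true, Bool.not_eq_true',
      ← Bool.not_eq_true, beq_code, ih, ← Perm.mul_apply, ← pow_succ]
    constructor
    · rintro (rfl | ⟨hd, j, hj, hy, hx⟩)
      · exact ⟨0, k.succ_pos, rfl, fun i hi => absurd hi i.not_lt_zero⟩
      · exact ⟨j + 1, Nat.succ_lt_succ hj, hy, fun i hi => by
          cases i with
          | zero => exact hd
          | succ i => exact hx i (Nat.lt_of_succ_lt_succ hi)⟩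
    · rintro ⟨_ | j, hj, hy, hx⟩
      · exact .inl hy
      · exact .inr ⟨hx 0 j.succ_pos, j, Nat.lt_of_succ_lt_succ hj, hy,
          fun i hi => hx (i + 1) (Nat.succ_lt_succ hi)⟩

lemma reaches_pack_iff_sameCycle {s : PartialDessin n} {x y : Dart n} (hxy : x ≠ y) :
    reaches (n * 3) (pack s.glue) (code x) (code y) (n * 3)
      (faceCode (n * 3) (pack s.glue) (code x)) ↔ s.face.SameCycle x y := by
  rw [faceCode_pack, reaches_pack_iff]
  simp only [← Perm.mul_apply, ← pow_succ]
  constructor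
  · rintro ⟨j, -, hj, -⟩
    exact ⟨(j + 1 : ℕ), hj⟩
  · intro h
    obtain ⟨_ | k, hk, hinj⟩ := exists_injOn_pow h
    · exact absurd hk hxy
    refine ⟨k, ?_, hk, fun i hi h => ?_⟩
    · have := (card_image_of_injOn (s := .Iic (k + 1)) (by rwa [coe_Iic])).symm.trans_le
        (card_le_univ _)
      simp only [Nat.card_Iic, Fintype.card_prod, Fintype.card_fin] at this
      exact Nat.lt_of_succ_lt this
    · exact i.succ_ne_zero (hinj (Nat.succ_le_succ hi.le) (Nat.zero_le _) h)

end Encoding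

section SumsTo

variable {ι : Type*} {F : ι → ℕ} {A B : Set ι} {v w : ℕ}

/-- The set `A` is finite and the sum of `F` over `A` is `v`. -/
def SumsTo (F : ι → ℕ) (A : Set ι) (v : ℕ) : Prop :=
  ∃ s : Finset ι, s = A ∧ ∑ i ∈ s, F i = v

namespace SumsTo

lemma empty (F : ι → ℕ) : SumsTo F ∅ 0 := ⟨∅, coe_empty, sum_empty⟩

lemma singleton (F : ι → ℕ) (i : ι) : SumsTo F {i} (F i) :=
  ⟨{i}, coe_singleton i, sum_singleton F i⟩

lemma union (hA : SumsTo F A v) (hB : SumsTo F B w) (h : Disjoint A B) :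
    SumsTo F (A ∪ B) (v + w) := by
  classical
  obtain ⟨s, rfl, rfl⟩ := hA
  obtain ⟨t, rfl, rfl⟩ := hB
  exact ⟨s ∪ t, coe_union s t, sum_union (disjoint_coe.1 h)⟩

lemma biUnion {κ : Type*} {t : Finset κ} {A : κ → Set ι} {v : κ → ℕ}
    (hA : ∀ k ∈ t, SumsTo F (A k) (v k)) (h : (t : Set κ).PairwiseDisjoint A) :
    SumsTo F (⋃ k ∈ t, A k) (∑ k ∈ t, v k) := by
  classical
  choose! s hs hv using hA
  refine ⟨t.biUnion s, ?_, ?_⟩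
  · rw [coe_biUnion]
    exact Set.iUnion₂_congr hs
  · rw [sum_biUnion fun i hi j hj hij => ?_, sum_congr rfl hv]
    rw [onFun, ← disjoint_coe, hs i hi, hs j hj]
    exact h hi hj hij

end SumsTo

end SumsTo

section Recursion

namespace PartialDessin

variable {n : ℕ} {s : PartialDessin n} {Γ : Subgroup PSL2Z} {x : Dart n}
  {l : List (Dart n)} {a : Fin n} {e : ℕ}

lemma map_code_join (s : PartialDessin n) (x y : Dart n) (l : List (Dart n)) :
    (s.join x y l).openDarts.map code = (l.map code).erase (code y) :=
  List.map_erase code_injective l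

lemma map_code_extend (ha : a = s.size) :
    (s.extend x a l).openDarts.map code =
      (3 * s.size + 1) :: (3 * s.size + 2) :: l.map code := by
  simp [code_mk, ha, add_comm]

variable [NeZero n]

/-- The torsion-free genus zero subgroups of index `3 * n` whose dessins contain `s`. -/
def subgroups (s : PartialDessin n) : Set (Subgroup PSL2Z) :=
  {Γ | TorsionFreeGenusZero (3 * n) Γ ∧ s.Embeds Γ}

lemma IsValid.subgroups_eq (hs : s.IsValid) (hL : s.openDarts = x :: l)
    (he : 3 * s.size + 2 * (e + 1) = s.openDarts.length + 3 * n) :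
    s.subgroups = (⋃ y ∈ l.toFinset, (s.join x y l).subgroups) ∪
      ⋃ a ∈ ({a | a = s.size} : Finset (Fin n)), (s.extend x a l).subgroups := by
  ext Γ
  simp only [subgroups, Set.mem_union, Set.mem_iUnion, Set.mem_ofPred_eq, mem_filter_univ,
    List.mem_toFinset, exists_prop]
  constructor
  · rintro ⟨hΓ, h⟩
    obtain ⟨x', l', hL', h⟩ := hs.exists_embeds hΓ.2.2 hΓ.1 he h
    obtain ⟨rfl, rfl⟩ := List.cons_eq_cons.1 (hL.symm.trans hL')
    exact h.imp (fun ⟨y, hy, h⟩ => ⟨y, hy, hΓ, h⟩) fun ⟨a, ha, h⟩ => ⟨a, ha, hΓ, h⟩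
  · rintro (⟨y, hy, hΓ, h⟩ | ⟨a, ha, hΓ, h⟩)
    · exact ⟨hΓ, ((hs.join_embeds_iff hL hy).1 h).1⟩
    · exact ⟨hΓ, hs.embeds_of_embeds_extend hL ha h⟩

lemma IsValid.pairwiseDisjoint_subgroups_join (hs : s.IsValid) (hL : s.openDarts = x :: l) :
    (l.toFinset : Set (Dart n)).PairwiseDisjoint fun y => (s.join x y l).subgroups := by
  intro y hy z hz hyz
  rw [mem_coe, List.mem_toFinset] at hy hz
  refine Set.disjoint_left.2 fun Γ ⟨_, h⟩ ⟨_, h'⟩ => hyz ?_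
  rw [hs.join_embeds_iff hL hy] at h
  rw [hs.join_embeds_iff hL hz] at h'
  exact h.1.injOn (hs.lt_of_mem y (by simp [hL, hy])) (hs.lt_of_mem z (by simp [hL, hz]))
    (h.2.symm.trans h'.2)

lemma IsValid.disjoint_subgroups_join_extend (hs : s.IsValid) (hL : s.openDarts = x :: l) :
    Disjoint (⋃ y ∈ l.toFinset, (s.join x y l).subgroups)
      (⋃ a ∈ ({a | a = s.size} : Finset (Fin n)), (s.extend x a l).subgroups) := by
  simp only [Set.disjoint_iUnion_left, Set.disjoint_iUnion_right, mem_filter_univ,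
    List.mem_toFinset]
  refine fun a ha y hy => Set.disjoint_left.2 fun Γ ⟨hΓ, h⟩ ⟨_, h'⟩ => ?_
  exact ((hs.extend_embeds_iff hΓ.2.2 hL ha).1 h').2 y (hs.lt_of_mem y (by simp [hL, hy]))
    ((hs.join_embeds_iff hL hy).1 h).2

lemma IsValid.subgroups_eq_empty (hs : s.IsValid)
    (he : 3 * s.size + 2 * e = s.openDarts.length + 3 * n) (h : 2 * s.euler e < 5 * n + 4) :
    s.subgroups = ∅ := by
  refine Set.eq_empty_of_forall_notMem fun Γ ⟨⟨hind, h0, htf⟩, hΓ⟩ => ?_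
  have := hs.nOrb_Tp_le_euler htf hind he hΓ
  rw [htf.genusZero_iff, hind] at h0
  omega

lemma IsValid.pack_glue_join (hs : s.IsValid) {y : Dart n} (hL : s.openDarts = x :: l)
    (hy : y ∈ l) :
    pack (s.join x y l).glue = joinCode (n * 3) (pack s.glue) (code x) (code y) := by
  rw [hs.coe_glue_join hL hy, joinCode_pack (hs.glue_eq_self (by simp [hL]))
    (hs.glue_eq_self (by simp [hL, hy])) (hs.ne_of_mem hL hy)]

lemma IsValid.pack_glue_extend (hs : s.IsValid) (hL : s.openDarts = x :: l) (ha : a = s.size) :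
    pack (s.extend x a l).glue = joinCode (n * 3) (pack s.glue) (code x) (3 * s.size) := by
  have hxa : x ≠ (a, 0) := fun h => (hs.lt_size hL).ne (h ▸ ha)
  rw [hs.coe_glue_extend hL ha, ← joinCode_pack (hs.glue_eq_self (by simp [hL]))
    (hs.glue_eq_self_of_le ha.ge) hxa, code_mk a, ha, Fin.val_zero, zero_add]

lemma IsValid.sumsTo_search_cons {F : Subgroup PSL2Z → ℕ} {w : ℕ → ℕ} (hs : s.IsValid)
    (hL : s.openDarts = x :: l) (he : 3 * s.size + 2 * (e + 1) = s.openDarts.length + 3 * n)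
    (heuler : 2 * s.euler (e + 1) = 5 * n + 4)
    (hjoin : ∀ y ∈ l, s.face.SameCycle x y → SumsTo F (s.join x y l).subgroups
      (search (n * 3) w e s.size ((l.map code).erase (code y))
        (joinCode (n * 3) (pack s.glue) (code x) (code y))))
    (hextend : ∀ a : Fin n, a = s.size → SumsTo F (s.extend x a l).subgroups
      (search (n * 3) w e (s.size + 1) ((3 * s.size + 1) :: (3 * s.size + 2) :: l.map code)
        (joinCode (n * 3) (pack s.glue) (code x) (3 * s.size)))) :
    SumsTo F s.subgroups
      (search (n * 3) w (e + 1) s.size (s.openDarts.map code) (pack s.glue)) := by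
  have hnodup := List.nodup_cons.1 (hL ▸ hs.nodup)
  rw [hs.subgroups_eq hL he, hL, List.map_cons, search, List.map_map,
    ← List.sum_toFinset _ hnodup.2]
  refine (SumsTo.biUnion (fun y hy => ?_) (hs.pairwiseDisjoint_subgroups_join hL)).union ?_
    (hs.disjoint_subgroups_join_extend hL)
  · have hy := List.mem_toFinset.1 hy
    rw [Function.comp_apply, cond_eq_ite]
    split_ifs with hxy <;> rw [reaches_pack_iff_sameCycle (hs.ne_of_mem hL hy)] at hxy
    · exact hjoin y hy hxy
    · have := euler_join_add_two (l := l) (e := e) hxy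
      rw [(hs.join hL hy).subgroups_eq_empty (edges_join hL hy he) (by omega)]
      exact .empty F
  · by_cases hlt : s.size < n
    · have huniq : ({a | a = s.size} : Finset (Fin n)) = {⟨s.size, hlt⟩} := by
        ext
        simp [Fin.ext_iff]
      rw [huniq, set_biUnion_singleton, (3 * s.size).blt_eq.mpr (by omega), cond_true]
      exact hextend ⟨s.size, hlt⟩ rfl
    · have hempty : ({a | a = s.size} : Finset (Fin n)) = ∅ :=
        filter_eq_empty_iff.2 fun a _ ha => hlt (ha ▸ a.2)
      rw [hempty, cond_eq_ite, if_neg (by rw [Nat.blt_eq]; omega)]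
      simpa using SumsTo.empty F

lemma IsValid.sumsTo_search {F : Subgroup PSL2Z → ℕ} {w : ℕ → ℕ}
    (hw : ∀ {s : PartialDessin n}, s.IsValid → s.size = n → s.openDarts = [] →
      2 * numCycles s.face = n + 4 → SumsTo F s.subgroups (w (pack s.glue)))
    (hs : s.IsValid) (he : 3 * s.size + 2 * e = s.openDarts.length + 3 * n)
    (heuler : 2 * s.euler e = 5 * n + 4) :
    SumsTo F s.subgroups
      (search (n * 3) w e s.size (s.openDarts.map code) (pack s.glue)) := by
  induction e generalizing s with
  | zero =>
    obtain ⟨hn, hL⟩ := size_eq_and_openDarts_eq_nil hs he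
    rw [search]
    refine hw hs hn hL ?_
    rw [euler, hn] at heuler
    omega
  | succ e ih =>
    rcases hL : s.openDarts with _ | ⟨x, l⟩
    · suffices s.subgroups = ∅ from this ▸ .empty F
      refine Set.eq_empty_of_forall_notMem fun Γ ⟨hΓ, h⟩ => ?_
      obtain ⟨x, l, h, -⟩ := hs.exists_embeds hΓ.2.2 hΓ.1 he h
      simp [hL] at h
    rw [← hL]
    refine hs.sumsTo_search_cons hL he heuler (fun y hy hxy => ?_) fun a ha => ?_
    · rw [← map_code_join s x, ← hs.pack_glue_join hL hy]
      exact ih (hs.join hL hy) (edges_join hL hy he) (by rwa [hs.euler_join hL hy hxy])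
    · rw [← map_code_extend (x := x) ha, ← hs.pack_glue_extend hL ha]
      exact ih (hs.extend hL ha) (edges_extend hL he) (by rwa [hs.euler_extend hL ha])

end PartialDessin

end Recursion

section Start

namespace PartialDessin

variable {n : ℕ} [NeZero n] {Γ : Subgroup PSL2Z}

lemma numCycles_rot (n : ℕ) : numCycles (rot : Perm (Dart n)) = n := by
  have rot_pow (k : ℕ) (d : Dart n) : (rot ^ k) d = (d.1, d.2 + k • 1) := by
    induction k with
    | zero => simp
    | succ k ih => rw [pow_succ', Perm.mul_apply, ih, rot_apply, add_assoc, succ_nsmul]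
  refine (Nat.card_congr ?_).trans (Nat.card_fin n)
  refine .ofBijective (Quotient.lift Prod.fst fun d e h => ?_) ⟨?_, fun a => ⟨⟦(a, 0)⟧, rfl⟩⟩
  · obtain ⟨k, rfl⟩ := Perm.SameCycle.exists_nat_pow_eq h
    rw [rot_pow]
  · rintro ⟨a, b⟩ ⟨a', c⟩ (rfl : a = a')
    have add_nsmul_one (b c : Fin 3) : b + ((c - b : Fin 3) : ℕ) • 1 = c := by decide +revert
    refine Quotient.sound ⟨((c - b : Fin 3) : ℕ), ?_⟩
    rw [zpow_natCast, rot_pow, add_nsmul_one]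

lemma start_embeds (hΓ : TorsionFree Γ) : (start n).Embeds Γ where
  injOn := by
    rintro ⟨a, b⟩ ha ⟨a', c⟩ ha' h
    obtain rfl : a = a' := Fin.ext ((Nat.lt_one_iff.1 ha).trans (Nat.lt_one_iff.1 ha').symm)
    exact congrArg _ (injective_coset_mk hΓ _ _ h)
  Sp_smul d hd h := absurd (((isValid_start n).glue_eq_self_iff d).1 rfl hd) h

lemma pack_id (n : ℕ) : pack (id : Dart n → Dart n) = idCode (n * 3) := by
  rw [pack_eq_sum, idCode]
  exact sum_code fun i => i * (n * 3) ^ i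

lemma sumsTo_search_start {F : Subgroup PSL2Z → ℕ} {w : ℕ → ℕ} {e : ℕ}
    (hw : ∀ {s : PartialDessin n}, s.IsValid → s.size = n → s.openDarts = [] →
      2 * numCycles s.face = n + 4 → SumsTo F s.subgroups (w (pack s.glue)))
    (he : 2 * e = 3 * n) :
    SumsTo F {Γ | TorsionFreeGenusZero (3 * n) Γ}
      (search (n * 3) w e 1 [0, 1, 2] (idCode (n * 3))) := by
  have heuler : 2 * (start n).euler e = 5 * n + 4 := by
    have : (start n).face = rot := one_mul _
    rw [euler, this, numCycles_rot]
    change 2 * (n + e + 2 * 1) = _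
    omega
  have subgroups_start :
      (start n).subgroups = {Γ | TorsionFreeGenusZero (3 * n) Γ} :=
    Set.ext fun Γ => and_iff_left_of_imp fun h => start_embeds h.2.2
  have map_code_start : (start n).openDarts.map code = [0, 1, 2] := by simp [start, code_mk]
  rw [← subgroups_start, ← pack_id, ← map_code_start]
  exact (isValid_start n).sumsTo_search hw (by simp [start, he, add_comm]) heuler

end PartialDessin

end Start

section Lifts

namespace PartialDessin

variable {n : ℕ} [NeZero n] {s : PartialDessin n} {φ : Dart n → Dart n}

/-- The map agreeing with `φ` at the vertices below `a` and sending all other darts to `(0, 0)`. -/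
def restrictBelow (φ : Dart n → Dart n) (a : ℕ) (d : Dart n) : Dart n :=
  if d.1 < a then φ d else (0, 0)

lemma pack_restrictBelow_zero (φ : Dart n → Dart n) : pack (restrictBelow φ 0) = 0 := by
  simp [pack_eq_sum, restrictBelow, code_mk]

lemma pack_restrictBelow_succ (φ : Dart n → Dart n) (a : Fin n) :
    pack (restrictBelow φ (a + 1)) = pack (restrictBelow φ a) +
      code (φ (a, 0)) * (n * 3) ^ (3 * (a : ℕ)) + code (φ (a, 1)) * (n * 3) ^ (3 * (a : ℕ) + 1) +
        code (φ (a, 2)) * (n * 3) ^ (3 * (a : ℕ) + 2) := by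
  have pack_update_of_zero {f : Dart n → Dart n} {x : Dart n} (hx : f x = (0, 0)) (v) :
      pack (update f x v) = pack f + code v * (n * 3) ^ code x := by
    simpa [hx, code_mk 0] using pack_update f x v
  have update_eq : restrictBelow φ (a + 1) = update (update (update (restrictBelow φ a)
      (a, 0) (φ (a, 0))) (a, 1) (φ (a, 1))) (a, 2) (φ (a, 2)) := by
    ext1 ⟨b, i⟩
    obtain rfl | hb := eq_or_ne b a
    · fin_cases i <;> simp [restrictBelow]
    · have := Fin.val_ne_of_ne hb
      simp only [restrictBelow, update_apply, Prod.mk.injEq, hb, false_and, if_false]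
      congr 1
      simp only [eq_iff_iff]
      omega
  rw [update_eq, pack_update_of_zero (by simp [restrictBelow]),
    pack_update_of_zero (by simp [restrictBelow]),
    pack_update_of_zero (by simp [restrictBelow]), code_mk a, code_mk a, code_mk a]
  simp [add_comm]

lemma commutesAt_restrictBelow (a : Fin n) (b : Fin 3) :
    commutesAt (n * 3) (pack s.glue) (pack (restrictBelow φ (a + 1))) (3 * a + b) ↔
      code (a, b) ≤ code (s.glue (a, b)) ∨ s.glue (φ (a, b)) = φ (s.glue (a, b)) := by
  have restrict_self : restrictBelow φ (a + 1) (a, b) = φ (a, b) := if_pos a.1.lt_succ_self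
  rw [← (code_mk a b).trans (add_comm _ _), commutesAt, entry_pack, entry_pack,
    entry_pack, entry_pack, Bool.or_eq_true, Nat.ble_eq, Nat.beq_eq, code_injective.eq_iff,
    restrict_self]
  refine or_congr_right' fun h => ?_
  have hlt : (s.glue (a, b)).1 < (a + 1 : ℕ) := by
    rw [code_mk, ← Prod.mk.eta (p := s.glue (a, b)), code_mk] at h
    omega
  rw [restrictBelow, if_pos hlt]

section Root

variable (hs : s.IsValid) (hn : s.size = n)
  (hroot : ∀ a, a ≠ 0 → φ (a, 0) = s.glue (φ (s.glue (a, 0))))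
include hs hn hroot

lemma IsValid.code_apply_root {a : ℕ} (h : a + 1 < n) :
    entry (n * 3) (pack s.glue) (entry (n * 3) (pack (restrictBelow φ (a + 1)))
      (entry (n * 3) (pack s.glue) (3 * (a + 1)))) = code (φ (⟨a + 1, h⟩, 0)) := by
  have hne : (⟨a + 1, h⟩ : Fin n) ≠ 0 := fun h0 => a.succ_ne_zero (congrArg Fin.val h0)
  have hlt := (hs.root_eq _ hne (h.trans_eq hn.symm)).1
  have hcode : code ((⟨a + 1, h⟩, 0) : Dart n) = 3 * (a + 1) := Nat.zero_add _
  rw [hroot _ hne, ← hcode, entry_pack, entry_pack, entry_pack, restrictBelow]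
  rw [if_pos (show (s.glue (⟨a + 1, h⟩, 0)).1.1 < a + 1 from hlt)]

lemma IsValid.lifts_iff (hrot : ∀ d, φ (rot d) = rot (φ d)) {k a v : ℕ} (hk : a + k = n)
    (hv : ∀ h : a < n, v = code (φ (⟨a, h⟩, 0))) :
    lifts (n * 3) (pack s.glue) k (3 * a) v (pack (restrictBelow φ a)) ↔
      ∀ d : Dart n, a ≤ d.1 → code d ≤ code (s.glue d) ∨ s.glue (φ d) = φ (s.glue d) := by
  induction k generalizing a v with
  | zero =>
    simp only [lifts, true_iff]
    exact fun d hd => absurd d.1.2 (hk ▸ hd.not_gt)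
  | succ k ih =>
    have ha : a < n := by omega
    have hpack : pack (restrictBelow φ a) + v * (n * 3) ^ (3 * a) +
        rotCode v * (n * 3) ^ (3 * a + 1) + rotCode (rotCode v) * (n * 3) ^ (3 * a + 2) =
          pack (restrictBelow φ (a + 1)) := by
      rw [hv ha, rotCode_code, rotCode_code, ← hrot, ← hrot]
      exact (pack_restrictBelow_succ φ ⟨a, ha⟩).symm
    rw [lifts]
    simp only [hpack, Bool.and_eq_true]
    rw [← mul_add_one, ih (by omega) (hs.code_apply_root hn hroot)]
    have commutes (i : Fin 3) := commutesAt_restrictBelow (s := s) (φ := φ) ⟨a, ha⟩ i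
    refine (and_congr (and_congr (and_congr (commutes 0) (commutes 1)) (commutes 2)) .rfl).trans ?_
    refine ⟨fun ⟨⟨⟨h₀, h₁⟩, h₂⟩, h⟩ ⟨b, i⟩ hb => ?_, fun h =>
      ⟨⟨⟨h _ le_rfl, h _ le_rfl⟩, h _ le_rfl⟩, fun d hd => h d (Nat.le_of_succ_le hd)⟩⟩
    obtain hlt | rfl := Nat.lt_or_eq_of_le hb
    · exact h _ hlt
    · fin_cases i
      exacts [h₀, h₁, h₂]

end Root

end PartialDessin

end Lifts

section Leaf

lemma stabilizer_apply_of_map_smul {G X : Type*} [Group G] [MulAction G X] [Finite X]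
    [IsPretransitive G X] {φ : X → X} (hφ : ∀ (g : G) x, φ (g • x) = g • φ x) (x : X) :
    stabilizer G (φ x) = stabilizer G x := by
  have hinj : Injective φ := Finite.injective_iff_surjective.2 fun y =>
    (exists_smul_eq G (φ x) y).imp' (· • x) fun g hg => (hφ g x).trans hg
  ext g
  rw [mem_stabilizer_iff, mem_stabilizer_iff, ← hφ, hinj.eq_iff]

namespace PartialDessin

variable {n : ℕ} [NeZero n] {s : PartialDessin n}

namespace IsValid

lemma glue_ne_self (hs : s.IsValid) (hn : s.size = n) (hL : s.openDarts = []) (d : Dart n) :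
    s.glue d ≠ d := fun h => by
  simpa [hL] using (hs.glue_eq_self_iff d).1 h (d.1.2.trans_eq hn.symm)

variable [MulAction PSL2Z (Dart n)] (hs : s.IsValid) (hn : s.size = n)
  (hSp : ∀ d : Dart n, Sp • d = s.glue d) (hUp : ∀ d : Dart n, Up • d = rot d)
include hs hn hSp hUp

lemma stabilizer_eq_iff (y : Dart n) :
    stabilizer PSL2Z y = stabilizer PSL2Z ((0, 0) : Dart n) ↔
      ∀ d, s.glue (s.word d • y) = s.word (s.glue d) • y := by
  have := hs.isPretransitive hn hSp hUp
  constructor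
  · intro h d
    have : (s.word (s.glue d))⁻¹ * (Sp * s.word d) ∈ stabilizer PSL2Z y := by
      rw [h, mem_stabilizer_iff, mul_smul, mul_smul, hs.word_smul hn hSp hUp, hSp,
        inv_smul_eq_iff, hs.word_smul hn hSp hUp]
    rwa [mem_stabilizer_iff, mul_smul, inv_smul_eq_iff, mul_smul, hSp] at this
  · intro h
    have map_smul (g : PSL2Z) : ∀ d : Dart n, s.word (g • d) • y = g • s.word d • y := by
      induction g using PSL2Z_induction with
      | one => simp
      | Sp_mul g ih =>
        intro d
        rw [mul_smul, mul_smul, hSp, ← h, ih, hSp]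
      | Up_mul g ih =>
        intro d
        rw [mul_smul Up, mul_smul Up, hUp, ← Up_mul_word, mul_smul Up, ih]
    have := stabilizer_apply_of_map_smul (φ := fun d => s.word d • y) map_smul
      ((0, 0) : Dart n)
    rwa [word, hs.root_zero, mul_one, Fin.val_zero, pow_zero, one_smul] at this

lemma numLifts_pack (hL : s.openDarts = []) :
    numLifts (n * 3) (pack s.glue) = normalizerIndex (stabilizer PSL2Z ((0, 0) : Dart n)) := by
  have := hs.isPretransitive hn hSp hUp
  rw [numLifts, n.mul_div_cancel three_pos, card_code, normalizerIndex_stabilizer]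
  refine Nat.card_congr (Equiv.subtypeEquivRight fun y => ?_)
  have hlifts : lifts (n * 3) (pack s.glue) n 0 (code y) 0 ↔ lifts (n * 3) (pack s.glue) n (3 * 0)
      (code y) (pack (restrictBelow (fun d => s.word d • y) 0)) := by
    rw [pack_restrictBelow_zero, mul_zero]
  rw [hs.stabilizer_eq_iff hn hSp hUp, hlifts]
  refine (hs.lifts_iff hn ?_ ?_ (zero_add n) ?_).trans ?_
  · intro a ha
    have word_mk_zero : s.word (a, 0) = s.root a := one_mul _
    rw [word_mk_zero, (hs.root_eq a ha (a.2.trans_eq hn.symm)).2, mul_smul, hSp]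
  · intro d
    rw [← Up_mul_word, mul_smul Up, hUp]
  · intro h
    have word_zero : s.word (0, 0) = 1 := (one_mul _).trans hs.root_zero
    exact congrArg code ((one_smul PSL2Z y).symm.trans (congrArg (· • y) word_zero.symm))
  · refine ⟨fun h d => ?_, fun h d _ => .inr (h d)⟩
    obtain hd | hd := h d (Nat.zero_le _)
    · obtain hd' | hd' := h (s.glue d) (Nat.zero_le _)
      · rw [hs.glue_involutive] at hd'
        exact absurd (code_injective (hd'.antisymm hd)) (hs.glue_ne_self hn hL d)
      · rw [hs.glue_involutive] at hd'
        rw [← hd', hs.glue_involutive]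
    · exact hd

end IsValid

end PartialDessin

end Leaf

section Weight

/-- The summand of the weighted count of subgroups: only those subgroups count over which every
conjugacy class can be recovered by `sum_filter_normalizerIndex`. The first power of `B` records
the number of loops, and the second one serves to exclude carries. -/
noncomputable def subgroupWeight (B : ℕ) (Γ : Subgroup PSL2Z) : ℕ :=
  open Classical in
  if nFix Tp Γ = 0 ∨ Tp ∈ Γ then normalizerIndex Γ * (B ^ nFix Tp Γ + B ^ (Γ.index + 1)) else 0

namespace PartialDessin

variable {n : ℕ} [NeZero n] {s : PartialDessin n}

namespace IsValid

section Action

variable [MulAction PSL2Z (Dart n)] (hs : s.IsValid) (hn : s.size = n)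
  (hSp : ∀ d : Dart n, Sp • d = s.glue d) (hUp : ∀ d : Dart n, Up • d = rot d)
include hs hn hSp hUp

lemma numLoops_pack :
    numLoops (n * 3) (pack s.glue) = nFix Tp (stabilizer PSL2Z ((0, 0) : Dart n)) := by
  have := hs.isPretransitive hn hSp hUp
  rw [numLoops, card_code, nFix_stabilizer]
  refine Nat.card_congr (Equiv.subtypeEquivRight fun d => ?_)
  rw [faceCode_pack, Nat.beq_eq, code_injective.eq_iff, mem_fixedBy, ← toPerm_Tp hSp hUp,
    toPerm_apply]

variable (hL : s.openDarts = [])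
include hL

lemma weight_pack (B : ℕ) : weight B (n * 3) (pack s.glue) =
    subgroupWeight B (stabilizer PSL2Z ((0, 0) : Dart n)) := by
  have := hs.isPretransitive hn hSp hUp
  have Tp_mem_iff : (faceCode (n * 3) (pack s.glue) 0).beq 0 = true ↔
      Tp ∈ stabilizer PSL2Z ((0, 0) : Dart n) := by
    have code_zero : code ((0, 0) : Dart n) = 0 := by simp [code_mk]
    rw [mem_stabilizer_iff, ← toPerm_apply, toPerm_Tp hSp hUp, ← code_injective.eq_iff,
      ← faceCode_pack, code_zero, Nat.beq_eq]
  rw [weight, subgroupWeight, cond_eq_ite, hs.numLoops_pack hn hSp hUp,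
    hs.numLifts_pack hn hSp hUp hL, index_stabilizer_dart, mul_comm 3 n]
  simp only [Bool.or_eq_true, Tp_mem_iff, Nat.beq_eq]
  congr

lemma subgroups_eq_singleton (hcycles : 2 * numCycles s.face = n + 4) :
    s.subgroups = {stabilizer PSL2Z ((0, 0) : Dart n)} := by
  have := hs.isPretransitive hn hSp hUp
  have hindex := index_stabilizer_dart ((0, 0) : Dart n)
  have torsionFree : TorsionFree (stabilizer PSL2Z ((0, 0) : Dart n)) :=
    (torsionFree_stabilizer_iff _).2 ⟨fun d => hSp d ▸ hs.glue_ne_self hn hL d, fun d h => by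
      simpa [rot_apply, Prod.ext_iff] using (hUp d).symm.trans h⟩
  have genusZero : GenusZero (stabilizer PSL2Z ((0, 0) : Dart n)) := by
    rw [torsionFree.genusZero_iff, nOrb_stabilizer_eq_numCycles, toPerm_Tp hSp hUp, hindex]
    omega
  ext Γ
  rw [subgroups, Set.mem_ofPred_eq, hs.embeds_iff_eq_stabilizer hn hSp hUp hL,
    Set.mem_singleton_iff]
  refine and_iff_right_of_imp ?_
  rintro rfl
  exact ⟨hindex, genusZero, torsionFree⟩

end Action

lemma sumsTo_weight (hs : s.IsValid) (hn : s.size = n) (hL : s.openDarts = [])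
    (hcycles : 2 * numCycles s.face = n + 4) (B : ℕ) :
    SumsTo (subgroupWeight B) s.subgroups (weight B (n * 3) (pack s.glue)) := by
  obtain ⟨_, hSp, hUp⟩ := hs.exists_action
  rw [hs.subgroups_eq_singleton hn hSp hUp hL hcycles, hs.weight_pack hn hSp hUp hL]
  exact SumsTo.singleton _ _

end IsValid

end PartialDessin

end Weight

section Digits

lemma ofDigits_map_range (B m : ℕ) (c : ℕ → ℕ) :
    Nat.ofDigits B ((List.range m).map c) = ∑ j ∈ range m, c j * B ^ j := by
  induction m with
  | zero => rfl
  | succ m ih =>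
    rw [List.range_succ, List.map_append, Nat.ofDigits_append, ih, sum_range_succ,
      List.map_singleton, Nat.ofDigits_singleton, List.length_map, List.length_range, mul_comm]

lemma getD_append_replicate_default {α : Type*} (L : List α) (k j : ℕ) (d : α) :
    (L ++ List.replicate k d).getD j d = L.getD j d := by
  obtain hj | hj := lt_or_ge j L.length
  · exact List.getD_append _ _ _ _ hj
  · rw [List.getD_append_right _ _ _ _ hj, List.getD_eq_default _ _ hj]
    simp

lemma eq_of_ofDigits_add_mul_pow_eq {B A C m : ℕ} {L L' : List ℕ} (hB : 1 < B) (hA : A < B)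
    (hC : ∀ d ∈ L, d ≤ C) (hL' : ∀ d ∈ L', d < B) (hlen : L.length = m) (hlen' : L'.length = m)
    (h : Nat.ofDigits B L + C * B ^ m = Nat.ofDigits B L' + A * B ^ m) : L = L' := by
  have ofDigits_lt' : Nat.ofDigits B L' < B ^ m :=
    hlen' ▸ Nat.ofDigits_lt_base_pow_length hB hL'
  have C_le : C ≤ A := by
    refine Nat.le_of_lt_succ (Nat.lt_of_mul_lt_mul_right (a := B ^ m) ?_)
    rw [Nat.succ_mul]
    omega
  have hL (d) (hd : d ∈ L) : d < B := (hC d hd).trans_lt (C_le.trans_lt hA)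
  have ofDigits_lt : Nat.ofDigits B L < B ^ m := hlen ▸ Nat.ofDigits_lt_base_pow_length hB hL
  refine Nat.ofDigits_inj_of_len_eq hB (hlen.trans hlen'.symm) hL hL' ?_
  simpa [Nat.mod_eq_of_lt, ofDigits_lt, ofDigits_lt'] using congrArg (· % B ^ m) h

variable {ι : Type*} {s : Finset ι} {f ℓ : ι → ℕ} {B m : ℕ}

lemma sum_mul_pow_add_pow (hℓ : ∀ i ∈ s, ℓ i < m) :
    ∑ i ∈ s, f i * (B ^ ℓ i + B ^ m) =
      Nat.ofDigits B ((List.range m).map fun j => ∑ i ∈ s with ℓ i = j, f i) +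
        (∑ i ∈ s, f i) * B ^ m := by
  simp_rw [ofDigits_map_range, mul_add, sum_add_distrib, sum_mul]
  rw [← sum_fiberwise_of_maps_to (t := range m) (g := ℓ) fun i hi => mem_range.2 (hℓ i hi)]
  refine congrArg (· + _) (sum_congr rfl fun j _ => sum_congr rfl fun i hi => ?_)
  rw [(mem_filter.1 hi).2]

-- The term `B ^ m` of the weights bounds the sum of all `f i`, which excludes carries.
lemma sum_filter_eq_getD {A : ℕ} {L : List ℕ} (hℓ : ∀ i ∈ s, ℓ i < m) (hB : 1 < B) (hA : A < B)
    (hL : ∀ d ∈ L, d < B) (hlen : L.length ≤ m)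
    (h : ∑ i ∈ s, f i * (B ^ ℓ i + B ^ m) = Nat.ofDigits B L + A * B ^ m) (j : ℕ) :
    ∑ i ∈ s with ℓ i = j, f i = L.getD j 0 := by
  have map_eq : ((List.range m).map fun j => ∑ i ∈ s with ℓ i = j, f i) =
      L ++ List.replicate (m - L.length) 0 := by
    refine eq_of_ofDigits_add_mul_pow_eq (C := ∑ i ∈ s, f i) (m := m) hB hA ?_ ?_ (by simp)
      (by simp [hlen]) (by rw [← sum_mul_pow_add_pow hℓ, h, Nat.ofDigits_append_replicate_zero])
    · simpa using fun j _ => sum_le_sum_of_subset (f := f) (filter_subset _ s)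
    · simpa [or_imp, forall_and] using ⟨hL, fun _ => hB.le⟩
  rw [← getD_append_replicate_default L (m - L.length), ← map_eq]
  obtain hj | hj := lt_or_ge j m
  · simp [hj]
  · rw [List.getD_eq_default _ _ (by simpa), filter_false_of_mem fun i hi =>
      ((hℓ i hi).trans_le hj).ne, sum_empty]

end Digits

section Classification

lemma nFix_le_index (g : PSL2Z) {Γ : Subgroup PSL2Z} (hΓ : Γ.index ≠ 0) : nFix g Γ ≤ Γ.index :=
  have : Finite (PSL2Z ⧸ Γ) := Nat.finite_of_card_ne_zero hΓ
  Finite.card_subtype_le _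

lemma exists_finset_sum_normalizerIndex {n : ℕ} [NeZero n] {e : ℕ} (he : 2 * e = 3 * n) (B : ℕ) :
    ∃ s : Finset (Subgroup PSL2Z),
      (∀ Γ, Γ ∈ s ↔ TorsionFreeGenusZero (3 * n) Γ ∧ (nFix Tp Γ = 0 ∨ Tp ∈ Γ)) ∧
      ∑ Γ ∈ s, normalizerIndex Γ * (B ^ nFix Tp Γ + B ^ (3 * n + 1)) =
        search (n * 3) (weight B (n * 3)) e 1 [0, 1, 2] (idCode (n * 3)) := by
  classical
  obtain ⟨s, hs, hsum⟩ :=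
    PartialDessin.sumsTo_search_start (n := n) (F := subgroupWeight B) (w := weight B (n * 3))
      (fun h₁ h₂ h₃ h₄ => h₁.sumsTo_weight h₂ h₃ h₄ B) he
  have mem_iff (Γ) : Γ ∈ s ↔ TorsionFreeGenusZero (3 * n) Γ := by
    rw [← mem_coe, hs, Set.mem_ofPred_eq]
  refine ⟨{Γ ∈ s | nFix Tp Γ = 0 ∨ Tp ∈ Γ}, fun Γ => by rw [mem_filter, mem_iff], ?_⟩
  rw [← hsum, sum_filter]
  refine sum_congr rfl fun Γ hΓ => ?_
  rw [subgroupWeight, ((mem_iff Γ).1 hΓ).1]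

section Count

variable {n e : ℕ} [NeZero n] (he : 2 * e = 3 * n)
include he

lemma finite_classes_torsionFreeGenusZero : (classes (TorsionFreeGenusZero (3 * n))).Finite := by
  obtain ⟨s, hs, -⟩ := exists_finset_sum_normalizerIndex he 0
  rw [classes_eq_image .of_subgroupConj hs]
  exact s.finite_toSet.image _

lemma mul_countClasses_eq_getD {A B : ℕ} {L : List ℕ} (hB : 1 < B) (hA : A < B)
    (hL : ∀ d ∈ L, d < B) (hlen : L.length ≤ 3 * n + 1)
    (h : search (n * 3) (weight B (n * 3)) e 1 [0, 1, 2] (idCode (n * 3)) =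
      Nat.ofDigits B L + A * B ^ (3 * n + 1)) (m : ℕ) :
    (if m = 0 then 3 * n else m) *
      countClasses (fun Γ => TorsionFreeGenusZero (3 * n) Γ ∧ nFix Tp Γ = m) = L.getD m 0 := by
  obtain ⟨s, hs, hsum⟩ := exists_finset_sum_normalizerIndex he B
  have index_ne_zero : 3 * n ≠ 0 := mul_ne_zero three_ne_zero (NeZero.ne n)
  have nFix_lt (Γ) (hΓ : Γ ∈ s) : nFix Tp Γ < 3 * n + 1 := by
    have hindex := ((hs Γ).1 hΓ).1.1
    exact Nat.lt_succ_of_le <| hindex ▸ nFix_le_index Tp (hindex.trans_ne index_ne_zero)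
  rw [← sum_filter_normalizerIndex .of_subgroupConj index_ne_zero (fun Γ hΓ => hΓ.1) hs]
  exact sum_filter_eq_getD nFix_lt hB hA hL hlen (hsum.trans h) m

end Count

lemma countClasses_index24 (m : ℕ) :
    countClasses (fun Γ => TorsionFreeGenusZero 24 Γ ∧ nFix Tp Γ = m) =
      [20, 45, 71, 40, 14, 1].getD m 0 := by
  have key := mul_countClasses_eq_getD (n := 8) rfl (by simp) (by simp) (by simp) (by simp)
    search_eq m
  match m, key with
  | 0, key | 1, key | 2, key | 3, key | 4, key | 5, key | m + 6, key => simp at key ⊢; omega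

end Classification

/-- Among the 191 conjugacy classes of torsion-free genus-zero index-24 subgroups of
`PSL(2,ℤ)`, classified by the number of `T`-fixed cosets (loops of the dessin):
exactly 20 have none, 45 have one, 71 have two, 40 have three, 14 have four, and 1 has
five. -/
theorem count_index24_by_loops :
    countClasses (fun Γ => Γ.index = 24 ∧ GenusZero Γ ∧ TorsionFree Γ) = 191 ∧
    countClasses (fun Γ => (Γ.index = 24 ∧ GenusZero Γ ∧ TorsionFree Γ) ∧ nFix Tp Γ = 0) = 20 ∧
    countClasses (fun Γ => (Γ.index = 24 ∧ GenusZero Γ ∧ TorsionFree Γ) ∧ nFix Tp Γ = 1) = 45 ∧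
    countClasses (fun Γ => (Γ.index = 24 ∧ GenusZero Γ ∧ TorsionFree Γ) ∧ nFix Tp Γ = 2) = 71 ∧
    countClasses (fun Γ => (Γ.index = 24 ∧ GenusZero Γ ∧ TorsionFree Γ) ∧ nFix Tp Γ = 3) = 40 ∧
    countClasses (fun Γ => (Γ.index = 24 ∧ GenusZero Γ ∧ TorsionFree Γ) ∧ nFix Tp Γ = 4) = 14 ∧
    countClasses (fun Γ => (Γ.index = 24 ∧ GenusZero Γ ∧ TorsionFree Γ) ∧ nFix Tp Γ = 5) = 1 := by
  have total : countClasses (TorsionFreeGenusZero 24) = 191 := by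
    have nFix_lt (Γ) (hΓ : TorsionFreeGenusZero 24 Γ) : nFix Tp Γ < 25 :=
      Nat.lt_succ_of_le <| hΓ.1 ▸ nFix_le_index Tp (hΓ.1.trans_ne (by decide))
    rw [countClasses_eq_sum (finite_classes_torsionFreeGenusZero (e := 12) (n := 8) rfl)
      (fun h => nFix_eq_of_subgroupConj h Tp) nFix_lt,
      sum_congr rfl fun m _ => countClasses_index24 m]
    rfl
  exact ⟨total, countClasses_index24 0, countClasses_index24 1, countClasses_index24 2,
    countClasses_index24 3, countClasses_index24 4, countClasses_index24 5⟩
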